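/- Suppose all roots of 𝔤 have the same length with respect to the Killing form (𝔤 is simply laced). Let μ and ν be dominant integral weights of 𝔤 such that ν̄ − μ is a root of 𝔤. Then the 𝔤-invariant subspace of adj(𝔤) ⊗ V_μ ⊗ V_ν has dimension exactly 1. -/

import Mathlib

open scoped TensorProduct Classical
open LieAlgebra LieModule Module

namespace AdjPaper

variable {L : Type} [LieRing L] [LieAlgebra ℂ L]

/-- `χ` is a root of `L` relative to the Cartan subalgebra `H`: a nonzero linear functional
on `H` with nontrivial root space. -/
def IsRoot (H : LieSubalgebra ℂ L) [H.IsCartanSubalgebra] (χ : Module.Dual ℂ H) : Prop :=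
  χ ≠ 0 ∧ rootSpace H ⇑χ ≠ ⊥

/-- `t` is the coroot `χ∨` of the root `χ`: it lies in `⁅𝔤_χ, 𝔤_{-χ}⁆` and satisfies
`χ t = 2`. -/
def IsCoroot (H : LieSubalgebra ℂ L) [H.IsCartanSubalgebra] (χ : Module.Dual ℂ H) (t : H) : Prop :=
  χ t = 2 ∧ ∃ e ∈ rootSpace H ⇑χ, ∃ f ∈ rootSpace H ⇑(-χ), (t : L) = ⁅e, f⁆

/-- `α` enumerates the simple roots of a base of the root system of `(L, H)`. -/
structure IsBase (H : LieSubalgebra ℂ L) [H.IsCartanSubalgebra] {r : ℕ} (α : Fin r → Module.Dual ℂ H) : Prop where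
  isRoot : ∀ j, IsRoot H (α j)
  indep : LinearIndependent ℂ α
  pos_neg : ∀ χ : Module.Dual ℂ H, IsRoot H χ →
    (∃ c : Fin r → ℕ, χ = ∑ j, (c j : ℂ) • α j) ∨ (∃ c : Fin r → ℕ, χ = -∑ j, (c j : ℂ) • α j)

/-- `χ` is a positive root relative to the base `α`. -/
def IsPosRoot (H : LieSubalgebra ℂ L) [H.IsCartanSubalgebra] {r : ℕ} (α : Fin r → Module.Dual ℂ H)
    (χ : Module.Dual ℂ H) : Prop :=
  IsRoot H χ ∧ ∃ c : Fin r → ℕ, χ = ∑ j, (c j : ℂ) • α j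

/-- A weight `μ` is dominant integral: all its pairings `⟨μ, α_j∨⟩ = μ (hc j)` with the
simple coroots `hc j` are non-negative integers. -/
def IsDomInt {H : LieSubalgebra ℂ L} {r : ℕ} (hc : Fin r → H) (μ : Module.Dual ℂ H) : Prop :=
  ∀ j, ∃ n : ℕ, μ (hc j) = (n : ℂ)

/-- `V` is an irreducible `L`-module with highest weight `μ` (relative to the Cartan
subalgebra `H` and the base `α`): it is irreducible and possesses a nonzero vector of
`H`-weight `μ` annihilated by all positive root spaces. -/
def IsHWIrrep (H : LieSubalgebra ℂ L) [H.IsCartanSubalgebra] {r : ℕ} (α : Fin r → Module.Dual ℂ H)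
    (μ : Module.Dual ℂ H) (V : Type) [AddCommGroup V] [Module ℂ V]
    [LieRingModule L V] [LieModule ℂ L V] : Prop :=
  IsSimpleOrder (LieSubmodule ℂ L V) ∧
  ∃ v : V, v ≠ 0 ∧ (∀ x : H, ⁅(x : L), v⁆ = μ x • v) ∧
    ∀ χ : Module.Dual ℂ H, IsPosRoot H α χ → ∀ e ∈ rootSpace H ⇑χ, ⁅e, v⁆ = 0

/-- `W` is isomorphic to the dual representation `V*`: there is a nondegenerate
`𝔤`-invariant pairing `W × V → ℂ`. -/
def IsDualPair (W V : Type) [AddCommGroup W] [Module ℂ W] [LieRingModule L W]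
    [AddCommGroup V] [Module ℂ V] [LieRingModule L V] : Prop :=
  ∃ B : W →ₗ[ℂ] V →ₗ[ℂ] ℂ,
    (∀ w, (∀ v, B w v = 0) → w = 0) ∧ (∀ v, (∀ w, B w v = 0) → v = 0) ∧
    ∀ (x : L) (w : W) (v : V), B ⁅x, w⁆ v + B w ⁅x, v⁆ = 0

/-- `V` is an orthogonal representation: it has a nondegenerate invariant symmetric
bilinear form. -/
def IsOrthogonalRep (V : Type) [AddCommGroup V] [Module ℂ V] [LieRingModule L V] : Prop :=
  ∃ B : V →ₗ[ℂ] V →ₗ[ℂ] ℂ,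
    (∀ v w, B v w = B w v) ∧ (∀ v, (∀ w, B v w = 0) → v = 0) ∧
    ∀ (x : L) (v w : V), B ⁅x, v⁆ w + B v ⁅x, w⁆ = 0

/-- `V` is a symplectic representation: it has a nondegenerate invariant alternating
bilinear form. -/
def IsSymplecticRep (V : Type) [AddCommGroup V] [Module ℂ V] [LieRingModule L V] : Prop :=
  ∃ B : V →ₗ[ℂ] V →ₗ[ℂ] ℂ,
    (∀ v, B v v = 0) ∧ (∀ v, (∀ w, B v w = 0) → v = 0) ∧
    ∀ (x : L) (v w : V), B ⁅x, v⁆ w + B v ⁅x, w⁆ = 0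

variable (L) in
/-- The operator on `adj(𝔤) ⊗ V ⊗ V` exchanging the two copies of `V`. -/
noncomputable def swapMap (V : Type) [AddCommGroup V] [Module ℂ V] :
    (L ⊗[ℂ] (V ⊗[ℂ] V)) →ₗ[ℂ] (L ⊗[ℂ] (V ⊗[ℂ] V)) :=
  LinearMap.lTensor L (TensorProduct.comm ℂ V V).toLinearMap

variable (L) in
/-- The `𝔤`-invariant subspace of `adj(𝔤) ⊗ S²V`, realised inside `adj(𝔤) ⊗ V ⊗ V` as the
invariant vectors fixed by the swap of the two copies of `V`. -/
noncomputable def symSquareInvariants (V : Type) [AddCommGroup V] [Module ℂ V]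
    [LieRingModule L V] [LieModule ℂ L V] : Submodule ℂ (L ⊗[ℂ] (V ⊗[ℂ] V)) :=
  (maxTrivSubmodule ℂ L (L ⊗[ℂ] (V ⊗[ℂ] V)) : Submodule ℂ (L ⊗[ℂ] (V ⊗[ℂ] V))) ⊓
    LinearMap.ker (swapMap L V - LinearMap.id)

variable (L) in
/-- The `𝔤`-invariant subspace of `adj(𝔤) ⊗ Λ²V`, realised inside `adj(𝔤) ⊗ V ⊗ V` as the
invariant vectors anti-fixed by the swap of the two copies of `V`. -/
noncomputable def altSquareInvariants (V : Type) [AddCommGroup V] [Module ℂ V]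
    [LieRingModule L V] [LieModule ℂ L V] : Submodule ℂ (L ⊗[ℂ] (V ⊗[ℂ] V)) :=
  (maxTrivSubmodule ℂ L (L ⊗[ℂ] (V ⊗[ℂ] V)) : Submodule ℂ (L ⊗[ℂ] (V ⊗[ℂ] V))) ⊓
    LinearMap.ker (swapMap L V + LinearMap.id)

/-- `t ∈ 𝔥` represents the weight `χ` via the Killing form: `κ(t, ·) = χ` on `𝔥`.  Under
this identification, `⟨χ, ψ⟩ = ψ t` for weights `χ, ψ`. -/
def IsKillingDual (H : LieSubalgebra ℂ L) (χ : Module.Dual ℂ H) (t : H) : Prop :=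
  ∀ x : H, killingForm ℂ L (t : L) (x : L) = χ x

/-!
Decompose `Hom_𝔤(V_ν̄, Hom(V_μ*, E))` by evaluating a homomorphism at the highest weight vector of
`V_ν̄` and at the lowest weight vector of `V_μ*`. The value determines the homomorphism, lies in the
weight space `E_{ν̄-μ}`, and is annihilated by `e_i ^ (⟨μ, α_i∨⟩ + 1)` for all `i`.

Every vector with these properties arises, because the simple module of dominant highest weight `κ`
is the quotient of the Verma module by the relations `f_i ^ (⟨κ, α_i∨⟩ + 1) g = 0`. This in turn is
a consequence of the Casimir operator: on that quotient `f_i` acts locally nilpotently, so any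
singular vector has a dominant weight `η`, and two dominant weights `κ` and `η` with `κ - η` a sum
of simple roots have the same Casimir eigenvalue only if they are equal.

For `E = 𝔤` simply laced, a vector `x` of root weight `γ = ν̄ - μ` is annihilated automatically:
otherwise `γ + (⟨μ, α_i∨⟩ + 1) α_i` would be a root whose pairing with `α_i∨` is at least `2`, so it
would be `α_i` itself. Hence the dimension is that of the root space `𝔤_γ`.
-/

section Generation

variable {R 𝔤 M E : Type*} [CommRing R] [LieRing 𝔤] [LieAlgebra R 𝔤]
  [AddCommGroup M] [Module R M] [LieRingModule 𝔤 M]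
  [AddCommGroup E] [Module R E] [LieRingModule 𝔤 E]
  {𝔫 : LieSubalgebra R 𝔤} {m : M}

/-- The vector `m` generates the `𝔤`-module `M` under the action of the subalgebra `𝔫` alone. -/
def Generates (𝔫 : LieSubalgebra R 𝔤) (m : M) : Prop :=
  ∀ S : Submodule R M, m ∈ S → (∀ y ∈ 𝔫, ∀ u ∈ S, ⁅y, u⁆ ∈ S) → S = ⊤

theorem Generates.linearMap_ext (hm : Generates 𝔫 m) {A B : M →ₗ[R] E}
    (hA : ∀ y ∈ 𝔫, ∀ u, A ⁅y, u⁆ = ⁅y, A u⁆) (hB : ∀ y ∈ 𝔫, ∀ u, B ⁅y, u⁆ = ⁅y, B u⁆)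
    (h : A m = B m) : A = B :=
  LinearMap.eqLocus_eq_top.mp <| hm _ h fun y hy u (hu : A u = B u) => by
    rw [LinearMap.mem_eqLocus, hA y hy, hB y hy, hu]

theorem Generates.map (hm : Generates 𝔫 m) {f : M →ₗ⁅R,𝔤⁆ E} (hf : Function.Surjective f) :
    Generates 𝔫 (f m) := fun S hS lie_mem => by
  have hcomap : S.comap f.toLinearMap = ⊤ := hm _ hS fun y hy u hu => by
    rw [Submodule.mem_comap, LieModuleHom.coe_toLinearMap, LieModuleHom.map_lie]
    exact lie_mem y hy _ hu
  rw [← Submodule.map_comap_eq_of_surjective (f := f.toLinearMap) hf S, hcomap, Submodule.map_top,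
    LinearMap.range_eq_top.mpr hf]

variable [LieModule R 𝔤 M] [LieModule R 𝔤 E]

theorem Generates.map_lie (hm : Generates 𝔫 m) {A : M →ₗ[R] E}
    (hA : ∀ y ∈ 𝔫, ∀ u, A ⁅y, u⁆ = ⁅y, A u⁆) (hAm : ∀ x : 𝔤, A ⁅x, m⁆ = ⁅x, A m⁆) (x : 𝔤) (u : M) :
    A ⁅x, u⁆ = ⁅x, A u⁆ := by
  let S : Submodule R M := ⨅ x : 𝔤, LinearMap.eqLocus (A ∘ₗ toEnd R 𝔤 M x) (toEnd R 𝔤 E x ∘ₗ A)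
  have mem_S (u : M) : u ∈ S ↔ ∀ x : 𝔤, A ⁅x, u⁆ = ⁅x, A u⁆ := by
    simp only [S, Submodule.mem_iInf, LinearMap.mem_eqLocus, LinearMap.comp_apply,
      toEnd_apply_apply]
  have hS : S = ⊤ := hm S ((mem_S m).mpr hAm) fun y hy u hu => (mem_S _).mpr fun x => by
    rw [leibniz_lie, map_add, (mem_S u).mp hu, hA y hy, (mem_S u).mp hu, hA y hy, leibniz_lie x y]
  exact (mem_S u).mp (hS ▸ Submodule.mem_top) x

theorem lieSpan_singleton_le (hm : ∀ x : 𝔤, ∃ y ∈ 𝔫, ∃ a : R, ⁅x, m⁆ = ⁅y, m⁆ + a • m)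
    {S : Submodule R M} (hS : m ∈ S) (lie_mem : ∀ y ∈ 𝔫, ∀ u ∈ S, ⁅y, u⁆ ∈ S) :
    (LieSubmodule.lieSpan R 𝔤 {m}).toSubmodule ≤ S := by
  let stable : Set (Submodule R M) := {T | m ∈ T ∧ ∀ y ∈ 𝔫, ∀ u ∈ T, ⁅y, u⁆ ∈ T}
  let S₀ : Submodule R M := sInf stable
  have hS₀ : S₀ ∈ stable :=
    ⟨Submodule.mem_sInf.mpr fun T hT => hT.1, fun y hy u hu =>
      Submodule.mem_sInf.mpr fun T hT => hT.2 y hy u (Submodule.mem_sInf.mp hu T hT)⟩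
  let T : Submodule R M := S₀ ⊓ ⨅ x : 𝔤, S₀.comap (toEnd R 𝔤 M x)
  have mem_T (u : M) : u ∈ T ↔ u ∈ S₀ ∧ ∀ x : 𝔤, ⁅x, u⁆ ∈ S₀ := by
    simp only [T, Submodule.mem_inf, Submodule.mem_iInf, Submodule.mem_comap, toEnd_apply_apply]
  have hT : T ∈ stable := by
    refine ⟨(mem_T m).mpr ⟨hS₀.1, fun x => ?_⟩, fun y hy u hu =>
      (mem_T _).mpr ⟨hS₀.2 y hy u ((mem_T u).mp hu).1, fun x => ?_⟩⟩
    · obtain ⟨y, hy, a, hx⟩ := hm x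
      exact hx ▸ S₀.add_mem (hS₀.2 y hy m hS₀.1) (S₀.smul_mem a hS₀.1)
    · rw [leibniz_lie]
      exact S₀.add_mem (((mem_T u).mp hu).2 _) (hS₀.2 y hy _ (((mem_T u).mp hu).2 x))
  let N : LieSubmodule R 𝔤 M :=
    { S₀ with lie_mem := fun {x u} hu => ((mem_T u).mp (sInf_le hT hu)).2 x }
  exact fun u hu => sInf_le (s := stable) ⟨hS, lie_mem⟩
    (LieSubmodule.lieSpan_le (N := N).mpr (Set.singleton_subset_iff.mpr hS₀.1) hu)

end Generation

section Induced

attribute [local instance] LieRing.ofAssociativeRing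

variable {R 𝔤 : Type*} [CommRing R] [LieRing 𝔤] [LieAlgebra R 𝔤]

open UniversalEnvelopingAlgebra

theorem adjoin_range_ι_eq_top :
    Algebra.adjoin R (Set.range (ι R (L := 𝔤))) = ⊤ := by
  set S := Algebra.adjoin R (Set.range (ι R (L := 𝔤)))
  let f : 𝔤 →ₗ⁅R⁆ S :=
    { toLinearMap := (ι R (L := 𝔤)).toLinearMap.codRestrict
        (Subalgebra.toSubmodule S) fun x => Algebra.subset_adjoin ⟨x, rfl⟩
      map_lie' := fun {x y} => Subtype.ext (LieHom.map_lie _ x y) }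
  have hf : S.val.comp (lift R f) = AlgHom.id R _ := by
    ext x
    exact congrArg S.val (lift_ι_apply R f x)
  exact eq_top_iff.mpr fun u _ => by
    rw [← AlgHom.id_apply (R := R) u, ← hf]
    exact (lift R f u).2

theorem envelopingAlgebra_induction {p : UniversalEnvelopingAlgebra R 𝔤 → Prop}
    (one : p 1) (add : ∀ u v, p u → p v → p (u + v)) (smul : ∀ (a : R) u, p u → p (a • u))
    (ι_mul : ∀ y u, p u → p (ι R y * u))
    (u : UniversalEnvelopingAlgebra R 𝔤) : p u := by
  have hu : u ∈ Submodule.span R (Submonoid.closure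
      (Set.range (ι R (L := 𝔤))) :
        Set (UniversalEnvelopingAlgebra R 𝔤)) := by
    rw [← Algebra.adjoin_eq_span, adjoin_range_ι_eq_top]
    trivial
  induction hu using Submodule.span_induction with
  | mem v hv =>
    induction hv using Submonoid.closure_induction_left with
    | one => exact one
    | mul_left x hx v _ ih =>
      obtain ⟨y, rfl⟩ := hx
      exact ι_mul y v ih
  | zero => simpa using smul 0 1 one
  | add u v _ _ hu hv => exact add u v hu hv
  | smul a u _ hu => exact smul a u hu

variable {𝔫 𝔟 : LieSubalgebra R 𝔤} (h : IsCompl 𝔫.toSubmodule 𝔟.toSubmodule)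
  (χ : LieCharacter R 𝔟)

variable (R 𝔫) in
/-- The representation of `𝔫` on the linear maps `φ : 𝔤 → U(𝔫)` obtained from the multiplication of
`U(𝔫)` and the adjoint action. For `φ x = ⁅x, u⁆`, where `u` runs through a module containing
`U(𝔫)`, it takes `u` to `⁅y, u⁆`. -/
noncomputable def envelopeHomRep :
    𝔫 →ₗ⁅R⁆ Module.End R (𝔤 →ₗ[R] UniversalEnvelopingAlgebra R 𝔫) where
  toLinearMap := LinearMap.mk₂ R
    (fun y φ => LinearMap.mulLeft R (ι R y) ∘ₗ φ - φ ∘ₗ LieAlgebra.ad R 𝔤 (y : 𝔤))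
    (fun y z φ => by
      ext
      simp only [map_add, AddMemClass.coe_add, LinearMap.sub_apply, LinearMap.coe_comp,
        Function.comp_apply, LinearMap.mulLeft_apply, add_mul, LinearMap.add_apply, ad_apply]
      abel)
    (fun a y φ => by ext; simp [smul_sub])
    (fun y φ ψ => by
      ext
      simp only [LinearMap.sub_apply, LinearMap.coe_comp, Function.comp_apply,
        LinearMap.add_apply, LinearMap.mulLeft_apply, mul_add, ad_apply]
      abel)
    (fun a y φ => by ext; simp [smul_sub])
  map_lie' := by
    intro y z
    ext φ x
    simp only [AddHom.toFun_eq_coe, LinearMap.coe_toAddHom, LinearMap.mk₂_apply, LieHom.map_lie,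
      Ring.lie_def, LieSubalgebra.coe_bracket, LinearMap.sub_apply, LinearMap.coe_comp,
      Function.comp_apply, LinearMap.mulLeft_apply, sub_mul, mul_assoc, End.mul_apply, ad_apply,
      map_sub]
    abel

theorem envelopeHomRep_apply (y : 𝔫) (φ : 𝔤 →ₗ[R] UniversalEnvelopingAlgebra R 𝔫) (x : 𝔤) :
    envelopeHomRep R 𝔫 y φ x = ι R y * φ x - φ ⁅(y : 𝔤), x⁆ :=
  rfl

/-- The action of `𝔤 = 𝔫 ⊕ 𝔟` on `U(𝔫) = U(𝔤) ⊗_{U(𝔟)} χ`, as a function of the vector acted upon.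
It is determined by the value at `1` because it intertwines multiplication by `U(𝔫)` with
`envelopeHomRep`. -/
noncomputable def inducedAction :
    UniversalEnvelopingAlgebra R 𝔫 →ₗ[R] 𝔤 →ₗ[R] UniversalEnvelopingAlgebra R 𝔫 :=
  (lift R (envelopeHomRep R 𝔫)).toLinearMap.flip
    (LinearMap.ofIsCompl h (ι R : 𝔫 →ₗ⁅R⁆ UniversalEnvelopingAlgebra R 𝔫).toLinearMap
      (Algebra.linearMap R (UniversalEnvelopingAlgebra R 𝔫) ∘ₗ (χ : 𝔟 →ₗ[R] R)))

theorem inducedAction_one_of_mem_left (y : 𝔫) : inducedAction h χ 1 y = ι R y := by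
  simp only [inducedAction, LinearMap.flip_apply, AlgHom.toLinearMap_apply, map_one,
    Module.End.one_apply]
  exact LinearMap.ofIsCompl_apply_left h y

theorem inducedAction_one_of_mem_right (x : 𝔟) :
    inducedAction h χ 1 x = algebraMap R _ (χ x) := by
  simp only [inducedAction, LinearMap.flip_apply, AlgHom.toLinearMap_apply, map_one,
    Module.End.one_apply]
  exact LinearMap.ofIsCompl_apply_right h x

theorem inducedAction_ι_mul (y : 𝔫) (u : UniversalEnvelopingAlgebra R 𝔫) (x : 𝔤) :
    inducedAction h χ (ι R y * u) x =
      ι R y * inducedAction h χ u x + inducedAction h χ u ⁅x, (y : 𝔤)⁆ := by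
  simp only [inducedAction, LinearMap.flip_apply, AlgHom.toLinearMap_apply, map_mul,
    lift_ι_apply, Module.End.mul_apply]
  rw [envelopeHomRep_apply, ← lie_skew x, map_neg, sub_eq_add_neg]

theorem inducedAction_of_mem_left (y : 𝔫) (u : UniversalEnvelopingAlgebra R 𝔫) :
    inducedAction h χ u y = ι R y * u := by
  induction u using envelopingAlgebra_induction generalizing y with
  | one => simp [inducedAction_one_of_mem_left]
  | add u v hu hv => simp [hu, hv, mul_add]
  | smul a u hu => simp [hu]
  | ι_mul z u hu =>
    rw [inducedAction_ι_mul, hu y, ← LieSubalgebra.coe_bracket, hu ⁅y, z⁆, LieHom.map_lie,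
      Ring.lie_def]
    simp only [sub_mul, mul_assoc, add_sub_cancel]

theorem inducedAction_lie_one (x x' : 𝔤) :
    inducedAction h χ 1 ⁅x, x'⁆ = inducedAction h χ (inducedAction h χ 1 x') x
      - inducedAction h χ (inducedAction h χ 1 x) x' := by
  have right_mem (x : 𝔤) (y : 𝔫) : inducedAction h χ 1 ⁅x, (y : 𝔤)⁆ =
      inducedAction h χ (inducedAction h χ 1 y) x
        - inducedAction h χ (inducedAction h χ 1 x) y := by
    rw [inducedAction_one_of_mem_left, inducedAction_of_mem_left,
      ← congrArg (inducedAction h χ · x) (mul_one (ι R y)), inducedAction_ι_mul,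
      add_sub_cancel_left]
  obtain ⟨y, hy, b, hb, rfl⟩ := Submodule.mem_sup.mp (h.sup_eq_top.ge (Submodule.mem_top (x := x)))
  obtain ⟨y', hy', b', hb', rfl⟩ :=
    Submodule.mem_sup.mp (h.sup_eq_top.ge (Submodule.mem_top (x := x')))
  have hyb' := right_mem b' ⟨y, hy⟩
  have hby' := right_mem b ⟨y', hy'⟩
  have hyy' := right_mem y ⟨y', hy'⟩
  have hbb' : inducedAction h χ 1 ⁅b, b'⁆ = 0 := by
    have := inducedAction_one_of_mem_right h χ ⁅(⟨b, hb⟩ : 𝔟), ⟨b', hb'⟩⁆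
    simpa using this
  have hb1 := inducedAction_one_of_mem_right h χ ⟨b, hb⟩
  have hb1' := inducedAction_one_of_mem_right h χ ⟨b', hb'⟩
  rw [← lie_skew, map_neg] at hyb'
  simp only [Algebra.algebraMap_eq_smul_one] at hb1 hb1'
  simp only [hb1', map_smul] at hyb'
  simp only [add_lie, lie_add, map_add, LinearMap.add_apply, hyy', hby', hbb', hb1, hb1', map_smul,
    LinearMap.smul_apply, smul_smul]
  rw [neg_eq_iff_eq_neg.mp hyb', mul_comm (χ ⟨b', hb'⟩)]
  abel

theorem inducedAction_lie (x x' : 𝔤) (u : UniversalEnvelopingAlgebra R 𝔫) :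
    inducedAction h χ u ⁅x, x'⁆ = inducedAction h χ (inducedAction h χ u x') x
      - inducedAction h χ (inducedAction h χ u x) x' := by
  induction u using envelopingAlgebra_induction generalizing x x' with
  | one => exact inducedAction_lie_one h χ x x'
  | add u v hu hv => simp only [map_add, LinearMap.add_apply, hu, hv]; abel
  | smul a u hu => simp only [map_smul, LinearMap.smul_apply, hu, smul_sub]
  | ι_mul y u hu =>
    have jacobi : ⁅⁅x, x'⁆, (y : 𝔤)⁆ = ⁅⁅x, (y : 𝔤)⁆, x'⁆ + ⁅x, ⁅x', (y : 𝔤)⁆⁆ := by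
      rw [leibniz_lie x x', ← lie_skew ⁅x, (y : 𝔤)⁆ x']; abel
    simp only [inducedAction_ι_mul, map_add, LinearMap.add_apply, jacobi, hu, mul_sub]
    abel

/-- The `𝔤`-module `U(𝔤) ⊗_{U(𝔟)} χ` induced from the character `χ` of `𝔟`, realised on `U(𝔫)` for a
subalgebra `𝔫` complementary to `𝔟`. -/
def InducedModule (_ : IsCompl 𝔫.toSubmodule 𝔟.toSubmodule) (_ : LieCharacter R 𝔟) : Type _ :=
  UniversalEnvelopingAlgebra R 𝔫

namespace InducedModule

noncomputable instance : AddCommGroup (InducedModule h χ) :=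
  inferInstanceAs (AddCommGroup (UniversalEnvelopingAlgebra R 𝔫))

noncomputable instance : Module R (InducedModule h χ) :=
  inferInstanceAs (Module R (UniversalEnvelopingAlgebra R 𝔫))

noncomputable instance : LieRingModule 𝔤 (InducedModule h χ) where
  bracket x u := inducedAction h χ u x
  add_lie x x' u := map_add (inducedAction h χ u) x x'
  lie_add x u v := congrArg (· x) (map_add (inducedAction h χ) u v)
  leibniz_lie x x' u := eq_add_of_sub_eq (inducedAction_lie h χ x x' u).symm

instance : LieModule R 𝔤 (InducedModule h χ) where
  smul_lie a x u := map_smul (inducedAction h χ u) a x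
  lie_smul a x u := congrArg (· x) (map_smul (inducedAction h χ) a u)

/-- The canonical generator of an induced module. -/
noncomputable def generator : InducedModule h χ := (1 : UniversalEnvelopingAlgebra R 𝔫)

theorem lie_generator (b : 𝔟) : ⁅(b : 𝔤), generator h χ⁆ = χ b • generator h χ :=
  (inducedAction_one_of_mem_right h χ b).trans (Algebra.algebraMap_eq_smul_one _)

theorem lie_eq_ι_mul (y : 𝔫) (u : InducedModule h χ) :
    ⁅(y : 𝔤), u⁆ = (ι R y * (show UniversalEnvelopingAlgebra R 𝔫 from u) :
      UniversalEnvelopingAlgebra R 𝔫) :=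
  inducedAction_of_mem_left h χ y u

theorem generates_generator : Generates 𝔫 (generator h χ) := fun S hS lie_mem =>
  eq_top_iff.mpr fun u _ => envelopingAlgebra_induction
    (p := fun u : UniversalEnvelopingAlgebra R 𝔫 => u ∈ S) hS
    (fun _ _ => S.add_mem) (fun a _ => S.smul_mem a)
    (fun y v hv => lie_eq_ι_mul h χ y v ▸ lie_mem y y.2 v hv) u

variable {E : Type*} [AddCommGroup E] [Module R E] [LieRingModule 𝔤 E] [LieModule R 𝔤 E]

/-- The unique `𝔫`-equivariant map sending the generator to a given vector. -/
noncomputable def lift (x : E) : InducedModule h χ →ₗ[R] E :=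
  (UniversalEnvelopingAlgebra.lift R (LieModule.toEnd R 𝔫 E)).toLinearMap.flip x

theorem lift_generator (x : E) : lift h χ x (generator h χ) = x := by
  change UniversalEnvelopingAlgebra.lift R (LieModule.toEnd R 𝔫 E) 1 x = x
  rw [map_one, Module.End.one_apply]

theorem lift_lie (x : E) {y : 𝔤} (hy : y ∈ 𝔫) (u : InducedModule h χ) :
    lift h χ x ⁅y, u⁆ = ⁅y, lift h χ x u⁆ := by
  rw [lie_eq_ι_mul h χ ⟨y, hy⟩]
  change UniversalEnvelopingAlgebra.lift R (LieModule.toEnd R 𝔫 E) (_ * _) x = _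
  rw [map_mul, lift_ι_apply]
  rfl

end InducedModule
end Induced

section WeightParts

variable {K 𝔥 M : Type*} [Field K] [LieRing 𝔥] [LieAlgebra K 𝔥]
  [AddCommGroup M] [Module K M] [LieRingModule 𝔥 M] [LieModule K 𝔥 M]
  {κ : Dual K 𝔥} {S T : Set (Dual K 𝔥)} {m : M}

variable (M) in
/-- The sum of the weight spaces of `M` whose weight lies in `S`. -/
def weightPart (S : Set (Dual K 𝔥)) : LieSubmodule K 𝔥 M :=
  ⨆ κ ∈ S, weightSpace M (⇑κ : 𝔥 → K)

theorem mem_weightPart (hκ : κ ∈ S) (hm : m ∈ weightSpace M ⇑κ) : m ∈ weightPart M S :=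
  le_iSup₂_of_le (f := fun κ (_ : κ ∈ S) => weightSpace M ⇑κ) κ hκ le_rfl hm

theorem weightPart_toSubmodule_le_iff {N : Submodule K M} :
    (weightPart M S).toSubmodule ≤ N ↔
      ∀ κ ∈ S, ∀ m ∈ weightSpace M (⇑κ : 𝔥 → K), m ∈ N := by
  simp only [weightPart, LieSubmodule.iSup_toSubmodule, iSup_le_iff]
  rfl

theorem weightPart_mono (h : S ⊆ T) : weightPart M S ≤ weightPart M T :=
  biSup_mono h

variable [LieRing.IsNilpotent 𝔥]

variable (M) in
theorem iSupIndep_weightSpace : iSupIndep fun κ : Dual K 𝔥 => weightSpace M (⇑κ : 𝔥 → K) :=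
  ((iSupIndep_genWeightSpace K 𝔥 M).comp DFunLike.coe_injective).mono
    fun κ => weightSpace_le_genWeightSpace M ⇑κ

theorem mem_of_sum_mem_of_mem_weightSpace (N : LieSubmodule K 𝔥 M) {s : Finset (Dual K 𝔥)}
    {u : Dual K 𝔥 → M} (hu : ∀ κ ∈ s, u κ ∈ weightSpace M ⇑κ) (hN : ∑ κ ∈ s, u κ ∈ N)
    (hκ : κ ∈ s) : u κ ∈ N := by
  rw [← LieSubmodule.mem_toSubmodule, ← Submodule.Quotient.mk_eq_zero]
  refine (iSupIndep_iff_finsetSum_eq_zero_imp_eq_zero _).mp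
    (LieSubmodule.iSupIndep_toSubmodule.mpr (iSupIndep_weightSpace (M ⧸ N))) s
    (fun κ => LieSubmodule.Quotient.mk' N (u κ)) (fun κ hκ => ?_) ?_ κ hκ
  · refine (mem_weightSpace _ _).mpr fun x => ?_
    rw [← LieModuleHom.map_lie, (mem_weightSpace _ _).mp (hu κ hκ) x, map_smul]
  · rw [← map_sum]
    exact (Submodule.Quotient.mk_eq_zero N.toSubmodule).mpr hN

theorem exists_mem_weightSpace_of_ne_bot {N : LieSubmodule K 𝔥 M} (hNS : N ≤ weightPart M S)
    (hN : N ≠ ⊥) : ∃ κ ∈ S, ∃ u ∈ N, u ≠ 0 ∧ u ∈ weightSpace M (⇑κ : 𝔥 → K) := by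
  obtain ⟨x, hx, hx0⟩ : ∃ x ∈ N, x ≠ 0 := by
    simpa only [ne_eq, LieSubmodule.eq_bot_iff, not_forall, exists_prop] using hN
  have hxS : x ∈ ⨆ κ, ⨆ _ : κ ∈ S, (weightSpace M (⇑κ : 𝔥 → K)).toSubmodule := by
    simpa only [weightPart, LieSubmodule.iSup_toSubmodule] using
      (show x ∈ (weightPart M S).toSubmodule from hNS hx)
  obtain ⟨u, hu, rfl⟩ := (Submodule.mem_iSup_iff_exists_finsupp _ _).mp hxS
  obtain ⟨κ, hκ⟩ := Finsupp.support_nonempty_iff.mpr fun h0 : u = 0 => hx0 (by simp [h0])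
  have hu' (κ : Dual K 𝔥) (hκ : u κ ≠ 0) : κ ∈ S ∧ u κ ∈ weightSpace M ⇑κ := by
    have := hu κ
    by_cases hκS : κ ∈ S <;> simp_all
  rw [Finsupp.mem_support_iff] at hκ
  exact ⟨κ, (hu' κ hκ).1, u κ, mem_of_sum_mem_of_mem_weightSpace N
    (fun κ hκ => (hu' κ (Finsupp.mem_support_iff.mp hκ)).2) hx
    (Finsupp.mem_support_iff.mpr hκ), hκ, (hu' κ hκ).2⟩

theorem eq_zero_of_mem_weightSpace_of_mem_weightPart (hκ : κ ∉ S) (hmκ : m ∈ weightSpace M ⇑κ)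
    (hmS : m ∈ weightPart M S) : m = 0 :=
  (LieSubmodule.mem_bot m).mp (((iSupIndep_weightSpace M).disjoint_biSup hκ).le_bot ⟨hmκ, hmS⟩)

theorem disjoint_weightPart (h : Disjoint S T) : Disjoint (weightPart M S) (weightPart M T) := by
  by_contra hST
  obtain ⟨κ, hκ, u, hu, hu0, huκ⟩ :=
    exists_mem_weightSpace_of_ne_bot (S := S) inf_le_left (mt disjoint_iff.mpr hST)
  exact hu0 (eq_zero_of_mem_weightSpace_of_mem_weightPart (Set.disjoint_left.mp h hκ) huκ hu.2)

section LieSubalgebra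

variable {𝔤 N : Type*} [LieRing 𝔤] [LieAlgebra K 𝔤] {H : LieSubalgebra K 𝔤}
  [AddCommGroup N] [Module K N] [LieRingModule 𝔤 N] [LieModule K 𝔤 N]
  {χ κ : Dual K H} {S T U : Set (Dual K H)} {x : 𝔤} {n : N}

theorem lie_mem_weightSpace (hx : x ∈ weightSpace 𝔤 ⇑χ) (hn : n ∈ weightSpace N ⇑κ) :
    ⁅x, n⁆ ∈ weightSpace N ⇑(χ + κ) := by
  rw [mem_weightSpace] at hx hn ⊢
  intro h
  rw [LieSubalgebra.coe_bracket_of_module, leibniz_lie, ← LieSubalgebra.coe_bracket_of_module,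
    ← LieSubalgebra.coe_bracket_of_module, hx, hn, smul_lie, lie_smul, ← add_smul]
  rfl

theorem lie_mem_weightPart (hU : ∀ χ ∈ S, ∀ κ ∈ T, χ + κ ∈ U) (hx : x ∈ weightPart 𝔤 S)
    (hn : n ∈ weightPart N T) : ⁅x, n⁆ ∈ weightPart N U := by
  have lie_right {χ : Dual K H} (hχ : χ ∈ S) {y : 𝔤} (hy : y ∈ weightSpace 𝔤 ⇑χ) :
      (weightPart N T).toSubmodule ≤ (weightPart N U).toSubmodule.comap (toEnd K 𝔤 N y) :=
    weightPart_toSubmodule_le_iff.mpr fun κ hκ u hu =>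
      mem_weightPart (hU χ hχ κ hκ) (lie_mem_weightSpace hy hu)
  have lie_left : (weightPart 𝔤 S).toSubmodule ≤ (weightPart N U).toSubmodule.comap
      ((toEnd K 𝔤 N : 𝔤 →ₗ[K] Module.End K N).flip n) :=
    weightPart_toSubmodule_le_iff.mpr fun χ hχ y hy => lie_right hχ hy hn
  exact lie_left hx

variable (H) in
/-- The subalgebra spanned by the weight spaces for `H` whose weight lies in an additively closed
set. -/
def gradedSubalgebra (S : AddSubsemigroup (Dual K H)) : LieSubalgebra K 𝔤 where
  __ := (weightPart 𝔤 (S : Set (Dual K H))).toSubmodule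
  lie_mem' := lie_mem_weightPart fun _ hχ _ hκ => S.add_mem hχ hκ

end LieSubalgebra

end WeightParts

section Cone

variable {X : Type*} [AddCommGroup X] {r : ℕ} {α : Fin r → X} {χ κ : X}

/-- The cone of combinations of the vectors `α` with natural coefficients. -/
def cone (α : Fin r → X) : AddSubmonoid X :=
  (LinearMap.range (Fintype.linearCombination ℕ α)).toAddSubmonoid

/-- The combinations of the vectors `α` with natural coefficients that are not all zero. -/
def strictCone (α : Fin r → X) : AddSubsemigroup X where
  carrier := Fintype.linearCombination ℕ α '' {0}ᶜ
  add_mem' := by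
    rintro _ _ ⟨c, hc, rfl⟩ ⟨d, -, rfl⟩
    exact ⟨c + d, fun h => hc (add_eq_zero.mp h).1, map_add _ c d⟩

theorem mem_cone_iff : κ ∈ cone α ↔ κ = 0 ∨ κ ∈ strictCone α := by
  constructor
  · rintro ⟨c, rfl⟩
    obtain rfl | hc := eq_or_ne c 0
    · exact Or.inl (map_zero _)
    · exact Or.inr ⟨c, hc, rfl⟩
  · rintro (rfl | ⟨c, -, rfl⟩)
    · exact zero_mem _
    · exact ⟨c, rfl⟩

theorem add_mem_strictCone (hχ : χ ∈ strictCone α) (hκ : κ ∈ cone α) : χ + κ ∈ strictCone α := by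
  obtain rfl | hκ := mem_cone_iff.mp hκ
  · rwa [add_zero]
  · exact add_mem hχ hκ

theorem apply_mem_strictCone (i : Fin r) : α i ∈ strictCone α :=
  ⟨Pi.single i 1, by simp, by
    rw [Fintype.linearCombination_apply_single, one_smul]⟩

theorem mem_strictCone_neg : κ ∈ strictCone (-α) ↔ -κ ∈ strictCone α := by
  have neg_apply (c : Fin r → ℕ) :
      Fintype.linearCombination ℕ (-α) c = -Fintype.linearCombination ℕ α c := by
    simp only [Fintype.linearCombination_apply, Pi.neg_apply, smul_neg, Finset.sum_neg_distrib]
  constructor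
  · rintro ⟨c, hc, rfl⟩
    exact ⟨c, hc, by rw [neg_apply, neg_neg]⟩
  · rintro ⟨c, hc, h⟩
    exact ⟨c, hc, by rw [neg_apply, h, neg_neg]⟩

theorem neg_notMem_cone (hα : LinearIndependent ℕ α) (hκ : κ ∈ strictCone α) : -κ ∉ cone α := by
  obtain ⟨c, hc, rfl⟩ := hκ
  rintro ⟨d, hd⟩
  have hcd : Fintype.linearCombination ℕ α (c + d) = Fintype.linearCombination ℕ α 0 := by
    rw [map_add, hd, map_zero, add_neg_cancel]
  exact hc (add_eq_zero.mp (hα.fintypeLinearCombination_injective hcd)).1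

theorem ne_zero_of_mem_strictCone (hα : LinearIndependent ℕ α) (hκ : κ ∈ strictCone α) : κ ≠ 0 := by
  rintro rfl
  exact neg_notMem_cone hα hκ (by rw [neg_zero]; exact zero_mem _)

theorem apply_sub_notMem_strictCone (hα : LinearIndependent ℕ α) (i : Fin r)
    (hκ : κ ∈ strictCone α) : α i - κ ∉ strictCone α := by
  obtain ⟨c, hc, rfl⟩ := hκ
  rintro ⟨d, hd, hdc⟩
  have hcd : c + d = Pi.single i 1 := hα.fintypeLinearCombination_injective <| by
    rw [map_add, hdc, add_sub_cancel, Fintype.linearCombination_apply_single, one_smul]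
  have hsum : ∑ j, c j + ∑ j, d j = 1 := by
    rw [← Finset.sum_add_distrib]
    exact (congrArg (fun b => ∑ j, b j) hcd).trans (Fintype.sum_pi_single' i 1)
  have := Fintype.sum_pos (pos_iff_ne_zero.mpr hc)
  have := Fintype.sum_pos (pos_iff_ne_zero.mpr hd)
  omega

end Cone

attribute [local instance] LieRing.ofAssociativeRing

section Triangular

/-- The sum of the root spaces of the roots that are positive with respect to the simple
roots `α`. -/
noncomputable def posPart (H : LieSubalgebra ℂ L) [LieRing.IsNilpotent H] {r : ℕ}
    (α : Fin r → Dual ℂ H) : LieSubalgebra ℂ L :=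
  gradedSubalgebra H (strictCone α)

/-- The Borel subalgebra spanned by `H` and the root spaces of the positive roots. -/
noncomputable def borel (H : LieSubalgebra ℂ L) [LieRing.IsNilpotent H] {r : ℕ}
    (α : Fin r → Dual ℂ H) : LieSubalgebra ℂ L :=
  gradedSubalgebra H (cone α).toAddSubsemigroup

variable {H : LieSubalgebra ℂ L} {r : ℕ} {α : Fin r → Dual ℂ H} {χ : Dual ℂ H}

theorem linearCombination_eq_sum_smul (c : Fin r → ℕ) :
    Fintype.linearCombination ℕ α c = ∑ j, (c j : ℂ) • α j := by
  simp only [Fintype.linearCombination_apply, Nat.cast_smul_eq_nsmul]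

theorem mem_cone_iff_exists : χ ∈ cone α ↔ ∃ c : Fin r → ℕ, χ = ∑ j, (c j : ℂ) • α j := by
  simp only [← linearCombination_eq_sum_smul, eq_comm (a := χ)]
  rfl

variable [H.IsCartanSubalgebra]

theorem posPart_le_borel : posPart H α ≤ borel H α :=
  weightPart_mono fun _ hχ => mem_cone_iff.mpr (Or.inr hχ)

theorem IsRoot.mem_strictCone (hχ : IsRoot H χ) (h : χ ∈ cone α) : χ ∈ strictCone α :=
  (mem_cone_iff.mp h).resolve_left hχ.1

theorem IsBase.natIndep (hα : IsBase H α) : LinearIndependent ℕ α := hα.indep.restrict_scalars' ℕ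

variable [FiniteDimensional ℂ L]

/-- A root, bundled as a weight. -/
def IsRoot.wt (hχ : IsRoot H χ) : Weight ℂ H L := ⟨⇑χ, hχ.2⟩

theorem isRoot_toLinear {χ : Weight ℂ H L} (hχ : χ.IsNonZero) : IsRoot H χ.toLinear :=
  ⟨fun h => hχ (Weight.coe_toLinear_eq_zero_iff.mp h), χ.genWeightSpace_ne_bot⟩

theorem killingForm_eq_zero_of_mem_weightSpace {κ : Dual ℂ H} {x y : L} (hx : x ∈ weightSpace L ⇑χ)
    (hy : y ∈ weightSpace L ⇑κ) (h : χ + κ ≠ 0) : killingForm ℂ L x y = 0 :=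
  killingForm_apply_eq_zero_of_mem_rootSpace_of_add_ne_zero ℂ L H
    (weightSpace_le_genWeightSpace L _ hx) (weightSpace_le_genWeightSpace L _ hy)
    fun h0 => h (DFunLike.coe_injective h0)

theorem killingForm_lie_eq_zero_of_mem_borel (hα : IsBase H α) (t : H) {x y : L}
    (hx : x ∈ borel H α) (hy : y ∈ borel H α) : killingForm ℂ L t ⁅x, y⁆ = 0 := by
  have of_mem {χ κ : Dual ℂ H} (hχ : χ ∈ cone α) (hκ : κ ∈ cone α) {x y : L}
      (hx : x ∈ weightSpace L ⇑χ) (hy : y ∈ weightSpace L ⇑κ) : killingForm ℂ L t ⁅x, y⁆ = 0 := by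
    have htx : ⁅(t : L), x⁆ = χ t • x := (mem_weightSpace _ _).mp hx t
    rw [← LieModule.traceForm_apply_lie_apply, htx, map_smul, LinearMap.smul_apply]
    obtain rfl | hχ := mem_cone_iff.mp hχ
    · exact zero_smul ℂ _
    · rw [killingForm_eq_zero_of_mem_weightSpace hx hy (ne_zero_of_mem_strictCone hα.natIndep
        (add_mem_strictCone hχ hκ)), smul_zero]
  have of_mem_right {χ : Dual ℂ H} (hχ : χ ∈ cone α) {x : L} (hx : x ∈ weightSpace L ⇑χ) :
      (weightPart L (cone α : Set (Dual ℂ H))).toSubmodule ≤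
        LinearMap.ker (killingForm ℂ L t ∘ₗ ad ℂ L x) :=
    weightPart_toSubmodule_le_iff.mpr fun κ hκ y hy => of_mem hχ hκ hx hy
  have of_mem_left : (weightPart L (cone α : Set (Dual ℂ H))).toSubmodule ≤
      LinearMap.ker (killingForm ℂ L t ∘ₗ (ad ℂ L : L →ₗ[ℂ] Module.End ℂ L).flip y) :=
    weightPart_toSubmodule_le_iff.mpr fun χ hχ x hx => of_mem_right hχ hx hy
  exact of_mem_left hx

variable [IsKilling ℂ L]

theorem rootSpace_eq_weightSpace (χ : Dual ℂ H) : rootSpace H ⇑χ = weightSpace L ⇑χ :=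
  le_antisymm
    (fun _ hx => (mem_weightSpace _ _).mpr fun h => IsKilling.lie_eq_smul_of_mem_rootSpace hx h)
    (weightSpace_le_genWeightSpace L _)

theorem mem_of_mem_weightSpace_zero {x : L} (hx : x ∈ weightSpace L ⇑(0 : Dual ℂ H)) : x ∈ H := by
  have := rootSpace_zero_eq ℂ L H
  rw [← rootSpace_eq_weightSpace] at hx
  exact this.le hx

theorem IsRoot.neg (hχ : IsRoot H χ) : IsRoot H (-χ) :=
  ⟨neg_ne_zero.mpr hχ.1, (-hχ.wt).genWeightSpace_ne_bot⟩

namespace IsBase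

theorem neg (hα : IsBase H α) : IsBase H (-α) where
  isRoot j := (hα.isRoot j).neg
  indep := hα.indep.neg
  pos_neg χ hχ := by
    simpa only [Pi.neg_apply, smul_neg, Finset.sum_neg_distrib, neg_neg]
      using (hα.pos_neg χ hχ).symm

theorem mem_strictCone_or_neg_mem (hα : IsBase H α) (hχ : IsRoot H χ) :
    χ ∈ strictCone α ∨ -χ ∈ strictCone α := by
  obtain h | ⟨c, hc⟩ := hα.pos_neg χ hχ
  · exact Or.inl (hχ.mem_strictCone (mem_cone_iff_exists.mpr h))
  · exact Or.inr (hχ.neg.mem_strictCone (mem_cone_iff_exists.mpr ⟨c, neg_eq_iff_eq_neg.mpr hc⟩))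

theorem isCompl_posPart_borel (hα : IsBase H α) :
    IsCompl (posPart H (-α)).toSubmodule (borel H α).toSubmodule := by
  constructor
  · refine LieSubmodule.disjoint_toSubmodule.mpr (disjoint_weightPart (Set.disjoint_left.mpr ?_))
    intro χ hneg hχ
    have := neg_notMem_cone hα.natIndep (mem_strictCone_neg.mp hneg)
    exact this (by rwa [neg_neg])
  · rw [codisjoint_iff_le_sup]
    have top_le : ⊤ ≤ weightPart L (strictCone (-α) : Set (Dual ℂ H)) ⊔
        weightPart L (cone α : Set (Dual ℂ H)) := by
      rw [← iSup_genWeightSpace_eq_top' ℂ H L]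
      refine iSup_le fun χ => ?_
      have hχ : genWeightSpace L ⇑χ = weightSpace L ⇑χ.toLinear :=
        rootSpace_eq_weightSpace χ.toLinear
      have le_of_mem {S : Set (Dual ℂ H)} (h : χ.toLinear ∈ S) :
          genWeightSpace L ⇑χ ≤ weightPart L S := fun x hx => mem_weightPart h (hχ ▸ hx)
      by_cases hχ0 : χ.IsZero
      · refine le_sup_of_le_right (le_of_mem ?_)
        rw [(Weight.coe_toLinear_eq_zero_iff).mpr hχ0]
        exact zero_mem (cone α)
      · obtain h | h := hα.mem_strictCone_or_neg_mem (isRoot_toLinear hχ0)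
        · exact le_sup_of_le_right (le_of_mem (mem_cone_iff.mpr (Or.inr h)))
        · exact le_sup_of_le_left (le_of_mem (mem_strictCone_neg.mpr h))
    exact fun x hx => by
      have := top_le hx
      rwa [← LieSubmodule.mem_toSubmodule, LieSubmodule.sup_toSubmodule] at this

end IsBase

variable (H) in
/-- The vector of the Cartan subalgebra that represents a weight via the Killing form. -/
noncomputable abbrev killingDual : Dual ℂ H ≃ₗ[ℂ] H := (IsKilling.cartanEquivDual H).symm

theorem isKillingDual_killingDual (χ : Dual ℂ H) : IsKillingDual H χ (killingDual H χ) :=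
  fun x => LinearMap.congr_fun ((IsKilling.cartanEquivDual H).apply_symm_apply χ) x

theorem mem_weightSpace_zero (t : H) : (t : L) ∈ weightSpace L ⇑(0 : Dual ℂ H) := by
  rw [← rootSpace_eq_weightSpace]
  exact (rootSpace_zero_eq ℂ L H).ge t.2

theorem coe_mem_borel (t : H) : (t : L) ∈ borel H α :=
  mem_weightPart (zero_mem (cone α)) (mem_weightSpace_zero t)

theorem killingForm_eq_zero_of_mem_posPart (hα : IsBase H α) (t : H) {x : L}
    (hx : x ∈ posPart H α) : killingForm ℂ L t x = 0 := by
  have le_ker : (weightPart L (strictCone α : Set (Dual ℂ H))).toSubmodule ≤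
      LinearMap.ker (killingForm ℂ L t) :=
    weightPart_toSubmodule_le_iff.mpr fun χ hχ x hx =>
      killingForm_eq_zero_of_mem_weightSpace (mem_weightSpace_zero t) hx
        (by rw [zero_add]; exact ne_zero_of_mem_strictCone hα.natIndep hχ)
  exact le_ker hx

/-- The character of the Borel subalgebra that extends the weight `κ` of the Cartan subalgebra. -/
noncomputable def borelCharacter (hα : IsBase H α) (κ : Dual ℂ H) : LieCharacter ℂ (borel H α) where
  toLinearMap := killingForm ℂ L (killingDual H κ) ∘ₗ (borel H α).subtype
  map_lie' {x y} := by
    rw [LieRing.of_associative_ring_bracket, mul_comm, sub_self]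
    exact killingForm_lie_eq_zero_of_mem_borel hα _ x.2 y.2

/-- The Verma module of highest weight `κ`. -/
abbrev Verma (hα : IsBase H α) (κ : Dual ℂ H) : Type :=
  InducedModule hα.isCompl_posPart_borel (borelCharacter hα κ)

variable {M : Type*} [AddCommGroup M] [Module ℂ M] [LieRingModule L M] [LieModule ℂ L M]

/-- The vector `m` has weight `κ` and is annihilated by the positive root spaces. -/
structure IsSingularVector (H : LieSubalgebra ℂ L) [LieRing.IsNilpotent H] {r : ℕ}
    (α : Fin r → Dual ℂ H) (κ : Dual ℂ H) {M : Type*} [AddCommGroup M] [Module ℂ M]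
    [LieRingModule L M] [LieModule ℂ L M] (m : M) : Prop where
  weight_mem : m ∈ weightSpace M ⇑κ
  lie_eq_zero : ∀ x ∈ posPart H α, ⁅x, m⁆ = 0

variable {κ : Dual ℂ H} {m : M}

theorem IsSingularVector.lie_eq_smul (hα : IsBase H α) (hm : IsSingularVector H α κ m) {x : L}
    (hx : x ∈ borel H α) : ⁅x, m⁆ = killingForm ℂ L (killingDual H κ) x • m := by
  have le_ker : (weightPart L (cone α : Set (Dual ℂ H))).toSubmodule ≤
      LinearMap.eqLocus ((toEnd ℂ L M : L →ₗ[ℂ] Module.End ℂ M).flip m)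
        ((killingForm ℂ L (killingDual H κ)).smulRight m) := by
    refine weightPart_toSubmodule_le_iff.mpr fun χ hχ x hx => ?_
    change ⁅x, m⁆ = killingForm ℂ L (killingDual H κ) x • m
    obtain rfl | hχ := mem_cone_iff.mp hχ
    · lift x to H using mem_of_mem_weightSpace_zero hx
      rw [isKillingDual_killingDual]
      exact (mem_weightSpace _ _).mp hm.weight_mem x
    · have hx' : x ∈ posPart H α := mem_weightPart hχ hx
      rw [hm.lie_eq_zero x hx', killingForm_eq_zero_of_mem_posPart hα _ hx', zero_smul]
  exact le_ker hx

variable {E : Type*} [AddCommGroup E] [Module ℂ E] [LieRingModule L E] [LieModule ℂ L E]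

theorem Generates.map_lie_of_isSingularVector (hα : IsBase H α)
    (hgen : Generates (posPart H (-α)) m) {A : M →ₗ[ℂ] E}
    (hA : ∀ y ∈ posPart H (-α), ∀ u, A ⁅y, u⁆ = ⁅y, A u⁆) (hm : IsSingularVector H α κ m)
    (hAm : IsSingularVector H α κ (A m)) (x : L) (u : M) : A ⁅x, u⁆ = ⁅x, A u⁆ := by
  refine hgen.map_lie hA (fun x => ?_) x u
  obtain ⟨y, hy, b, hb, rfl⟩ := Submodule.mem_sup.mp
    (hα.isCompl_posPart_borel.sup_eq_top.ge (Submodule.mem_top (x := x)))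
  rw [add_lie, add_lie, map_add, hA y hy, hm.lie_eq_smul hα hb, hAm.lie_eq_smul hα hb, map_smul]

namespace Verma

/-- The canonical generator of a Verma module. -/
noncomputable abbrev generator (hα : IsBase H α) (κ : Dual ℂ H) : Verma hα κ :=
  InducedModule.generator hα.isCompl_posPart_borel (borelCharacter hα κ)

theorem generates_generator (hα : IsBase H α) (κ : Dual ℂ H) :
    Generates (posPart H (-α)) (generator hα κ) :=
  InducedModule.generates_generator _ _

theorem isSingularVector_generator (hα : IsBase H α) (κ : Dual ℂ H) :
    IsSingularVector H α κ (generator hα κ) := by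
  have lie_generator (x : L) (hx : x ∈ borel H α) :=
    InducedModule.lie_generator hα.isCompl_posPart_borel (borelCharacter hα κ) ⟨x, hx⟩
  constructor
  · refine (mem_weightSpace _ _).mpr fun t => (lie_generator t (coe_mem_borel t)).trans ?_
    exact congrArg (· • _) (isKillingDual_killingDual κ t)
  · intro x hx
    refine (lie_generator x (posPart_le_borel hx)).trans ?_
    exact (congrArg (· • _) (killingForm_eq_zero_of_mem_posPart hα _ hx)).trans (zero_smul ℂ _)

/-- The homomorphism from a Verma module that sends the generator to a given singular vector. -/
noncomputable def lift (hα : IsBase H α) (hm : IsSingularVector H α κ m) :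
    Verma hα κ →ₗ⁅ℂ,L⁆ M where
  toLinearMap := InducedModule.lift hα.isCompl_posPart_borel (borelCharacter hα κ) m
  map_lie' {x u} := (generates_generator hα κ).map_lie_of_isSingularVector hα
    (fun _ hy u => InducedModule.lift_lie _ _ m hy u) (isSingularVector_generator hα κ)
    (by rwa [InducedModule.lift_generator]) x u

theorem lift_generator (hα : IsBase H α) (hm : IsSingularVector H α κ m) :
    lift hα hm (generator hα κ) = m :=
  InducedModule.lift_generator _ _ m

end Verma

end Triangular

section SingularVectors

variable {H : LieSubalgebra ℂ L} [H.IsCartanSubalgebra] {r : ℕ} {α : Fin r → Dual ℂ H}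
  {κ : Dual ℂ H} {M : Type*} [AddCommGroup M] [Module ℂ M] [LieRingModule L M] [LieModule ℂ L M]
  {m : M}

theorem lie_mem_weightPart_of_mem_posPart_neg {y : L} (hy : y ∈ posPart H (-α)) {u : M}
    (hu : u ∈ weightPart M {χ | κ - χ ∈ cone α}) :
    ⁅y, u⁆ ∈ weightPart M {χ | κ - χ ∈ strictCone α} := by
  refine lie_mem_weightPart (fun η hη χ hχ => ?_) hy hu
  have := add_mem_strictCone (mem_strictCone_neg.mp hη) hχ
  rwa [← sub_eq_neg_add, sub_sub, add_comm] at this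

theorem Generates.weightPart_eq_top (hgen : Generates (posPart H (-α)) m)
    (hm : m ∈ weightSpace M ⇑κ) : weightPart M {χ | κ - χ ∈ cone α} = ⊤ := by
  refine (LieSubmodule.toSubmodule_eq_top _).mp (hgen _ ?_ fun y hy u hu => ?_)
  · have hκ : κ - κ ∈ cone α := by rw [sub_self]; exact zero_mem _
    exact mem_weightPart hκ hm
  · have h : {χ | κ - χ ∈ strictCone α} ⊆ {χ | κ - χ ∈ cone α} :=
      fun _ hχ => mem_cone_iff.mpr (Or.inr hχ)
    have := lie_mem_weightPart_of_mem_posPart_neg hy hu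
    exact weightPart_mono h this

theorem Generates.span_sup_weightPart_eq_top (hgen : Generates (posPart H (-α)) m)
    (hm : m ∈ weightSpace M ⇑κ) :
    Submodule.span ℂ {m} ⊔ (weightPart M {χ | κ - χ ∈ strictCone α}).toSubmodule = ⊤ := by
  refine hgen _ (Submodule.mem_sup_left (Submodule.mem_span_singleton_self m)) fun y hy u _ => ?_
  refine Submodule.mem_sup_right (lie_mem_weightPart_of_mem_posPart_neg hy ?_)
  exact (hgen.weightPart_eq_top hm).ge trivial

theorem Generates.mem_span_of_mem_weightSpace (hα : IsBase H α)
    (hgen : Generates (posPart H (-α)) m) (hm : m ∈ weightSpace M ⇑κ) {u : M}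
    (hu : u ∈ weightSpace M ⇑κ) :
    u ∈ Submodule.span ℂ {m} := by
  obtain ⟨v, hv, w, hw, rfl⟩ := Submodule.mem_sup.mp
    ((hgen.span_sup_weightPart_eq_top hm).ge (Submodule.mem_top (x := u)))
  have span_le : Submodule.span ℂ {m} ≤ (weightSpace M ⇑κ).toSubmodule :=
    (Submodule.span_singleton_le_iff_mem _ _).mpr hm
  have hwκ : w ∈ (weightSpace M ⇑κ).toSubmodule :=
    (Submodule.add_mem_iff_right _ (span_le hv)).mp hu
  have hκ : κ ∉ {χ | κ - χ ∈ strictCone α} :=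
    fun h => ne_zero_of_mem_strictCone hα.natIndep h (sub_self κ)
  have hw0 : w = 0 := eq_zero_of_mem_weightSpace_of_mem_weightPart hκ hwκ hw
  rwa [hw0, add_zero]

/-- Among the weights `κ - ∑ cᵢ αᵢ` of `N`, one for which `∑ cᵢ` is minimal has only singular
vectors. -/
theorem exists_isSingularVector_of_ne_bot (hα : IsBase H α)
    (hM : weightPart M {χ | κ - χ ∈ cone α} = ⊤) {N : LieSubmodule ℂ L M} (hN : N ≠ ⊥) :
    ∃ χ, κ - χ ∈ cone α ∧ ∃ u ∈ N, u ≠ 0 ∧ IsSingularVector H α χ u := by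
  let weights : Set (Fin r → ℕ) :=
    {c | ∃ χ : Dual ℂ H, Fintype.linearCombination ℕ α c = κ - χ ∧
      ∃ u ∈ N, u ≠ 0 ∧ u ∈ weightSpace M ⇑χ}
  have mem_weights {χ : Dual ℂ H} {u : M} (hu : u ∈ N) (hu0 : u ≠ 0) (huχ : u ∈ weightSpace M ⇑χ) :
      ∃ c ∈ weights, Fintype.linearCombination ℕ α c = κ - χ := by
    by_contra! h
    have hχ : χ ∉ {χ | κ - χ ∈ cone α} := fun ⟨c, hc⟩ => h c ⟨χ, hc, u, hu, hu0, huχ⟩ hc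
    exact hu0 (eq_zero_of_mem_weightSpace_of_mem_weightPart hχ huχ (hM ▸ LieSubmodule.mem_top u))
  let N' : LieSubmodule ℂ H M := N.restr H
  have hN' : N' ≠ ⊥ := fun h => hN ((LieSubmodule.toSubmodule_eq_bot N).mp
    ((LieSubmodule.toSubmodule_eq_bot N').mpr h))
  obtain ⟨χ, -, u, hu, hu0, huχ⟩ := exists_mem_weightSpace_of_ne_bot (hM ▸ le_top) hN'
  obtain ⟨c, ⟨χ, hc, u, hu, hu0, huχ⟩, hmin⟩ := (measure fun c : Fin r → ℕ => ∑ j, c j).wf.has_min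
    weights ((mem_weights hu hu0 huχ).imp fun _ h => h.1)
  refine ⟨χ, ⟨c, hc⟩, u, hu, hu0, huχ, fun x hx => ?_⟩
  have le_ker : (weightPart L (strictCone α : Set (Dual ℂ H))).toSubmodule ≤
      LinearMap.ker ((toEnd ℂ L M : L →ₗ[ℂ] Module.End ℂ M).flip u) := by
    refine weightPart_toSubmodule_le_iff.mpr ?_
    rintro _ ⟨b, hb, rfl⟩ x hx
    by_contra hxu
    obtain ⟨d, hd, hdc⟩ := mem_weights (N.lie_mem hu) hxu (lie_mem_weightSpace hx huχ)
    have hbd : b + d = c := hα.natIndep.fintypeLinearCombination_injective <| by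
      rw [map_add, hdc, hc]; abel
    have hlt : ∑ j, d j < ∑ j, c j := by
      rw [← hbd, Fintype.sum_congr _ _ fun j => Pi.add_apply b d j, Finset.sum_add_distrib]
      exact lt_add_of_pos_left _ (Fintype.sum_pos (pos_iff_ne_zero.mpr hb))
    exact hmin d hd hlt
  exact le_ker hx

theorem Generates.exists_isSingularVector_dual (hα : IsBase H α)
    (hgen : Generates (posPart H (-α)) m) (hm : m ∈ weightSpace M ⇑κ) (hm0 : m ≠ 0) :
    ∃ ε : Dual ℂ M, ε ≠ 0 ∧ IsSingularVector H (-α) (-κ) ε := by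
  have hκ : κ ∉ {χ | κ - χ ∈ strictCone α} :=
    fun h => ne_zero_of_mem_strictCone hα.natIndep h (sub_self κ)
  obtain ⟨ε, hεm, hε⟩ := Submodule.exists_le_ker_of_notMem
    (p := (weightPart M {χ | κ - χ ∈ strictCone α}).toSubmodule)
    fun h => hm0 (eq_zero_of_mem_weightSpace_of_mem_weightPart hκ hm h)
  refine ⟨ε, fun h => hεm (by rw [h, LinearMap.zero_apply]), ?_, fun y hy => ?_⟩
  · refine (mem_weightSpace _ _).mpr fun t => LinearMap.ext fun u => ?_
    obtain ⟨v, hv, w, hw, rfl⟩ := Submodule.mem_sup.mp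
      ((hgen.span_sup_weightPart_eq_top hm).ge (Submodule.mem_top (x := u)))
    obtain ⟨a, rfl⟩ := Submodule.mem_span_singleton.mp hv
    have hw0 : ε w = 0 := hε hw
    have htw : ε ⁅t, w⁆ = 0 := hε (LieSubmodule.lie_mem _ hw)
    have htm : ⁅t, m⁆ = κ t • m := (mem_weightSpace _ _).mp hm t
    change -ε ⁅t, a • m + w⁆ = -κ t * ε (a • m + w)
    rw [lie_add, lie_smul, htm]
    simp only [map_add, map_smul, hw0, htw, smul_eq_mul]
    ring
  · refine LinearMap.ext fun u => ?_
    change -ε ⁅y, u⁆ = 0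
    rw [neg_eq_zero]
    exact hε (lie_mem_weightPart_of_mem_posPart_neg hy ((hgen.weightPart_eq_top hm).ge trivial))

variable [FiniteDimensional ℂ L] [IsKilling ℂ L]

namespace IsSingularVector

theorem lieSpan_singleton_le (hα : IsBase H α) (hm : IsSingularVector H α κ m) {S : Submodule ℂ M}
    (hS : m ∈ S) (lie_mem : ∀ y ∈ posPart H (-α), ∀ u ∈ S, ⁅y, u⁆ ∈ S) :
    (LieSubmodule.lieSpan ℂ L {m}).toSubmodule ≤ S := by
  refine AdjPaper.lieSpan_singleton_le (fun x => ?_) hS lie_mem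
  obtain ⟨y, hy, b, hb, rfl⟩ := Submodule.mem_sup.mp
    (hα.isCompl_posPart_borel.sup_eq_top.ge (Submodule.mem_top (x := x)))
  exact ⟨y, hy, _, by rw [add_lie, hm.lie_eq_smul hα hb]⟩

theorem generates [IsSimpleOrder (LieSubmodule ℂ L M)] (hα : IsBase H α)
    (hm : IsSingularVector H α κ m) (hm0 : m ≠ 0) : Generates (posPart H (-α)) m := by
  intro S hS lie_mem
  have span_eq_top : LieSubmodule.lieSpan ℂ L {m} = ⊤ := (eq_bot_or_eq_top _).resolve_left
    fun h => hm0 (by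
      simpa only [LieSubmodule.lieSpan_eq_bot_iff, Set.mem_singleton_iff, forall_eq] using h)
  have := hm.lieSpan_singleton_le hα hS lie_mem
  rwa [span_eq_top, LieSubmodule.top_toSubmodule, top_le_iff] at this

end IsSingularVector

end SingularVectors

section Chevalley

variable {H : LieSubalgebra ℂ L} [H.IsCartanSubalgebra] {r : ℕ} {α : Fin r → Dual ℂ H}
  {χ κ : Dual ℂ H} {x : L}

/-- Vectors `e i` and `f i` spanning the simple root spaces and their negatives that form
`sl₂`-triples with the simple coroots `h i`. -/
structure IsChevalleySystem (H : LieSubalgebra ℂ L) [H.IsCartanSubalgebra] {r : ℕ}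
    (α : Fin r → Dual ℂ H) (h : Fin r → H) (e f : Fin r → L) : Prop where
  isBase : IsBase H α
  isSl2Triple : ∀ i, IsSl2Triple (h i : L) (e i) (f i)
  e_mem : ∀ i, e i ∈ weightSpace L ⇑(α i)
  f_mem : ∀ i, f i ∈ weightSpace L ⇑(-α i)

namespace IsChevalleySystem

variable {h : Fin r → H} {e f : Fin r → L} (i : Fin r)
variable {M : Type*} [AddCommGroup M] [Module ℂ M] [LieRingModule L M] [LieModule ℂ L M] {m : M}

theorem e_mem_posPart (S : IsChevalleySystem H α h e f) : e i ∈ posPart H α :=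
  mem_weightPart (apply_mem_strictCone i) (S.e_mem i)

theorem f_mem_posPart_neg (S : IsChevalleySystem H α h e f) : f i ∈ posPart H (-α) :=
  mem_weightPart (apply_mem_strictCone (α := -α) i) (S.f_mem i)

theorem hasPrimitiveVectorWith (S : IsChevalleySystem H α h e f)
    (hm : IsSingularVector H α κ m) (hm0 : m ≠ 0) :
    (S.isSl2Triple i).HasPrimitiveVectorWith m (κ (h i)) where
  ne_zero := hm0
  lie_h := (mem_weightSpace _ _).mp hm.weight_mem (h i)
  lie_e := hm.lie_eq_zero _ (S.e_mem_posPart i)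

theorem exists_nat_of_finiteDimensional (S : IsChevalleySystem H α h e f)
    [FiniteDimensional ℂ M] (hm : IsSingularVector H α κ m)
    (hm0 : m ≠ 0) : ∃ n : ℕ, κ (h i) = n :=
  (S.hasPrimitiveVectorWith i hm hm0).exists_nat

theorem pow_f_eq_zero_of_finiteDimensional (S : IsChevalleySystem H α h e f)
    [FiniteDimensional ℂ M] (hm : IsSingularVector H α κ m)
    {n : ℕ} (hn : κ (h i) = n) : (toEnd ℂ L M (f i) ^ (n + 1)) m = 0 := by
  obtain rfl | hm0 := eq_or_ne m 0
  · exact map_zero _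
  · exact (S.hasPrimitiveVectorWith i hm hm0).pow_toEnd_f_eq_zero_of_eq_nat hn

theorem exists_nat_of_pow_f_eq_zero (S : IsChevalleySystem H α h e f)
    (hm : IsSingularVector H α κ m) (hm0 : m ≠ 0)
    (hf : ∃ k, (toEnd ℂ L M (f i) ^ k) m = 0) : ∃ n : ℕ, κ (h i) = n := by
  obtain ⟨n, hn, hn'⟩ := Nat.exists_not_and_succ_of_not_zero_of_exists hm0 hf
  refine ⟨n, ?_⟩
  have := (S.hasPrimitiveVectorWith i hm hm0).lie_e_pow_succ_toEnd_f n
  rw [hn', lie_zero, eq_comm, smul_eq_zero_iff_left hn, mul_eq_zero, sub_eq_zero] at this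
  exact this.resolve_left (Nat.cast_add_one_ne_zero n)

theorem pow_f_mem_weightSpace (S : IsChevalleySystem H α h e f)
    (hm : m ∈ weightSpace M ⇑κ) (n : ℕ) :
    (toEnd ℂ L M (f i) ^ n) m ∈ weightSpace M ⇑(κ - (n : ℂ) • α i) := by
  induction n with
  | zero => simpa using hm
  | succ n ih =>
    have := lie_mem_weightSpace (S.f_mem i) ih
    rw [pow_succ', Module.End.mul_apply]
    rwa [show -α i + (κ - (n : ℂ) • α i) = κ - ((n + 1 : ℕ) : ℂ) • α i by
      rw [Nat.cast_succ]
      module] at this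

variable [FiniteDimensional ℂ L]

theorem exists_pow_f_eq_zero (S : IsChevalleySystem H α h e f) (hgen : Generates (posPart H (-α)) m)
    (hm : ∃ k, (toEnd ℂ L M (f i) ^ k) m = 0) (u : M) :
    ∃ k, (toEnd ℂ L M (f i) ^ k) u = 0 := by
  have mem_iff (w : M) : w ∈ (toEnd ℂ L M (f i)).maxGenEigenspace 0 ↔
      ∃ k, (toEnd ℂ L M (f i) ^ k) w = 0 := by
    rw [Module.End.mem_maxGenEigenspace, zero_smul, sub_zero]
  have hf : f i ∈ rootSpace H ⇑(-α i) := weightSpace_le_genWeightSpace L _ (S.f_mem i)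
  obtain ⟨k, hk⟩ := LieAlgebra.isNilpotent_ad_of_mem_rootSpace (K := ℂ) H
    (DFunLike.coe_injective.ne (neg_ne_zero.mpr (S.isBase.isRoot i).1)) hf
  have ad_nilpotent (y : L) : y ∈ (toEnd ℂ L L (f i)).maxGenEigenspace 0 := by
    rw [Module.End.mem_maxGenEigenspace, zero_smul, sub_zero]
    exact ⟨k, LinearMap.congr_fun hk y⟩
  have := hgen _ ((mem_iff m).mpr hm) fun y _ w hw => by
    simpa only [add_zero] using lie_mem_maxGenEigenspace_toEnd (ad_nilpotent y) hw
  exact (mem_iff u).mp (this ▸ Submodule.mem_top)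

end IsChevalleySystem

theorem isRoot_of_mem_weightSpace (hχ : χ ≠ 0) (hx : x ∈ weightSpace L ⇑χ) (hx0 : x ≠ 0) :
    IsRoot H χ := by
  refine ⟨hχ, fun hbot => hx0 ?_⟩
  rw [← LieSubmodule.mem_bot (R := ℂ) (L := H), ← hbot]
  exact weightSpace_le_genWeightSpace L _ hx

variable [FiniteDimensional ℂ L]

theorem IsRoot.wt_isNonZero (hχ : IsRoot H χ) : hχ.wt.IsNonZero :=
  mt Weight.coe_toLinear_eq_zero_iff.mpr hχ.1

variable [IsKilling ℂ L]

theorem IsRoot.apply_coroot_self (hχ : IsRoot H χ) : χ (IsKilling.coroot hχ.wt) = 2 :=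
  IsKilling.root_apply_coroot hχ.wt_isNonZero

theorem IsRoot.killingForm_coroot_self (hχ : IsRoot H χ) :
    killingForm ℂ L (IsKilling.coroot hχ.wt) (IsKilling.coroot hχ.wt) =
      4 * (χ (killingDual H χ))⁻¹ := by
  refine (IsKilling.traceForm_coroot hχ.wt _).trans ?_
  rw [IsKilling.root_apply_coroot hχ.wt_isNonZero, smul_eq_mul, nsmul_eq_mul, mul_comm _ (2 : ℂ),
    ← mul_assoc, Nat.cast_ofNat]
  norm_num
  rfl

theorem IsRoot.exists_killingForm_coroot_self_eq (hχ : IsRoot H χ) :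
    ∃ n : ℤ, 0 < n ∧
      killingForm ℂ L (IsKilling.coroot hχ.wt) (IsKilling.coroot hχ.wt) = n := by
  have sum_eq : killingForm ℂ L (IsKilling.coroot hχ.wt) (IsKilling.coroot hχ.wt) =
      ∑ κ ∈ H.root, κ (IsKilling.coroot hχ.wt) * κ (IsKilling.coroot hχ.wt) := by
    have := LinearMap.congr_fun₂ (IsKilling.restrict_killingForm_eq_sum (K := ℂ) (L := L) (H := H))
      (IsKilling.coroot hχ.wt) (IsKilling.coroot hχ.wt)
    simpa only [LinearMap.sum_apply] using! this
  choose n hn using fun κ : Weight ℂ H L =>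
    (⟨_, IsKilling.apply_coroot_eq_cast hχ.wt κ⟩ : ∃ n : ℤ, κ (IsKilling.coroot hχ.wt) = n)
  refine ⟨∑ κ ∈ H.root, n κ * n κ, Finset.sum_pos' (fun κ _ => mul_self_nonneg _)
    ⟨hχ.wt, ?_, ?_⟩, ?_⟩
  · exact Finset.mem_filter.mpr ⟨Finset.mem_univ _, hχ.wt_isNonZero⟩
  · have : n hχ.wt = 2 := by
      exact_mod_cast (hn hχ.wt).symm.trans hχ.apply_coroot_self
    rw [this]
    norm_num
  · rw [sum_eq]
    push_cast
    exact Finset.sum_congr rfl fun κ _ => by rw [hn]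

theorem IsRoot.exists_pos_killingDual_eq_smul_coroot (hχ : IsRoot H χ) :
    ∃ p : ℝ, 0 < p ∧ killingDual H χ = (p : ℂ) • IsKilling.coroot hχ.wt := by
  obtain ⟨n, hn, heq⟩ := hχ.exists_killingForm_coroot_self_eq
  have hn0 : (n : ℂ) ≠ 0 := by exact_mod_cast hn.ne'
  have apply_killingDual : χ (killingDual H χ) = 4 * (n : ℂ)⁻¹ := by
    rw [← heq, hχ.killingForm_coroot_self, mul_inv, inv_inv,
      mul_inv_cancel_left₀ (by norm_num)]
  refine ⟨2 * (n : ℝ)⁻¹, by positivity, ?_⟩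
  have coroot_eq : IsKilling.coroot hχ.wt =
      2 • (χ (killingDual H χ))⁻¹ • killingDual H χ := rfl
  have hscalar : ((2 * (n : ℝ)⁻¹ : ℝ) : ℂ) * (2 * (4 * (n : ℂ)⁻¹)⁻¹) = 1 := by
    push_cast
    field_simp
    norm_num
  rw [coroot_eq, apply_killingDual, ← Nat.cast_smul_eq_nsmul ℂ, smul_smul, smul_smul,
    Nat.cast_ofNat, mul_assoc, hscalar, one_smul]

theorem eq_zero_of_mem_weightSpace_add_self (hχ : IsRoot H χ) (hx : x ∈ weightSpace L ⇑(χ + χ)) :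
    x = 0 := by
  by_contra hx0
  have add_ne_zero : χ + χ ≠ 0 := by
    rw [← two_nsmul]
    exact smul_ne_zero two_ne_zero hχ.1
  have := IsKilling.eq_neg_one_or_eq_zero_or_eq_one_of_eq_smul hχ.wt
    (isRoot_of_mem_weightSpace add_ne_zero hx hx0).wt hχ.wt_isNonZero 2
    ((congrArg DFunLike.coe (two_smul ℂ χ)).symm)
  norm_num at this

theorem IsBase.exists_isChevalleySystem (hα : IsBase H α) :
    ∃ h e f, IsChevalleySystem H α h e f := by
  choose h e f triple e_mem f_mem using fun i =>
    IsKilling.exists_isSl2Triple_of_weight_isNonZero (hα.isRoot i).wt_isNonZero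
  refine ⟨fun i => IsKilling.coroot (hα.isRoot i).wt, e, f, hα, fun i => ?_, fun i => ?_,
    fun i => ?_⟩
  · rw [← (triple i).h_eq_coroot (hα.isRoot i).wt_isNonZero (e_mem i) (f_mem i)]
    exact triple i
  · rw [← rootSpace_eq_weightSpace]
    exact e_mem i
  · rw [← rootSpace_eq_weightSpace]
    exact f_mem i

namespace IsChevalleySystem

variable {h : Fin r → H} {e f : Fin r → L}

theorem neg (S : IsChevalleySystem H α h e f) : IsChevalleySystem H (-α) (-h) f e where
  isBase := S.isBase.neg
  isSl2Triple i := (S.isSl2Triple i).symm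
  e_mem := S.f_mem
  f_mem i := by
    rw [Pi.neg_apply, neg_neg]
    exact S.e_mem i

variable (i : Fin r)

theorem h_eq_coroot (S : IsChevalleySystem H α h e f) :
    h i = IsKilling.coroot (S.isBase.isRoot i).wt := by
  refine Subtype.ext ((S.isSl2Triple i).h_eq_coroot (S.isBase.isRoot i).wt_isNonZero ?_ ?_)
  · exact weightSpace_le_genWeightSpace L _ (S.e_mem i)
  · exact weightSpace_le_genWeightSpace L _ (S.f_mem i)

theorem apply_h (S : IsChevalleySystem H α h e f) : α i (h i) = 2 := by
  rw [S.h_eq_coroot, IsRoot.apply_coroot_self]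

theorem mem_span_e (S : IsChevalleySystem H α h e f)
    (hx : x ∈ weightSpace L ⇑(α i)) : ∃ a : ℂ, a • e i = x := by
  have e_mem : e i ∈ rootSpace H ⇑(α i) := weightSpace_le_genWeightSpace L _ (S.e_mem i)
  have he : (⟨e i, e_mem⟩ : rootSpace H ⇑(α i)) ≠ 0 :=
    fun h0 => (S.isSl2Triple i).e_ne_zero (congrArg Subtype.val h0)
  obtain ⟨a, ha⟩ := exists_smul_eq_of_finrank_eq_one
    (IsKilling.finrank_rootSpace_eq_one _ (S.isBase.isRoot i).wt_isNonZero) he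
    ⟨x, weightSpace_le_genWeightSpace L _ hx⟩
  exact ⟨a, congrArg Subtype.val ha⟩

variable {M : Type*} [AddCommGroup M] [Module ℂ M] [LieRingModule L M] [LieModule ℂ L M] {m : M}

theorem lie_pow_f_eq_zero (S : IsChevalleySystem H α h e f)
    (hm : IsSingularVector H α κ m) (n : ℕ) :
    ∀ β ∈ strictCone α, β ≠ α i → ∀ x ∈ weightSpace L ⇑β,
      ⁅x, (toEnd ℂ L M (f i) ^ n) m⁆ = 0 := by
  induction n with
  | zero => exact fun β hβ _ x hx => hm.lie_eq_zero x (mem_weightPart hβ hx)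
  | succ n ih =>
    intro β hβ hβi x hx
    suffices ⁅⁅x, f i⁆, (toEnd ℂ L M (f i) ^ n) m⁆ = 0 by
      rw [pow_succ', Module.End.mul_apply, toEnd_apply_apply, leibniz_lie, this, ih β hβ hβi x hx,
        lie_zero, add_zero]
    obtain hxf | hxf := eq_or_ne ⁅x, f i⁆ 0
    · rw [hxf, zero_lie]
    have hxfβ : ⁅x, f i⁆ ∈ weightSpace L ⇑(β - α i) := by
      have := lie_mem_weightSpace hx (S.f_mem i)
      rwa [← sub_eq_add_neg] at this
    have hβ' : IsRoot H (β - α i) := isRoot_of_mem_weightSpace (sub_ne_zero.mpr hβi) hxfβ hxf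
    refine ih (β - α i) ?_ ?_ _ hxfβ
    · refine (S.isBase.mem_strictCone_or_neg_mem hβ').resolve_right ?_
      rw [neg_sub]
      exact apply_sub_notMem_strictCone S.isBase.natIndep i hβ
    · intro h2
      rw [sub_eq_iff_eq_add] at h2
      subst h2
      rw [eq_zero_of_mem_weightSpace_add_self (S.isBase.isRoot i) hx, zero_lie] at hxf
      exact hxf rfl

theorem isSingularVector_pow_f (S : IsChevalleySystem H α h e f)
    (hm : IsSingularVector H α κ m) {n : ℕ} (hn : κ (h i) = n) :
    IsSingularVector H α (κ - ((n + 1 : ℕ) : ℂ) • α i) ((toEnd ℂ L M (f i) ^ (n + 1)) m) := by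
  refine ⟨S.pow_f_mem_weightSpace i hm.weight_mem (n + 1), fun x hx => ?_⟩
  obtain rfl | hm0 := eq_or_ne m 0
  · rw [map_zero, lie_zero]
  have le_ker : (weightPart L (strictCone α : Set (Dual ℂ H))).toSubmodule ≤
      LinearMap.ker ((toEnd ℂ L M : L →ₗ[ℂ] Module.End ℂ M).flip
        ((toEnd ℂ L M (f i) ^ (n + 1)) m)) := by
    refine weightPart_toSubmodule_le_iff.mpr fun β hβ x hx => ?_
    obtain rfl | hβi := eq_or_ne β (α i)
    · obtain ⟨a, rfl⟩ := S.mem_span_e i hx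
      refine (smul_lie a _ _).trans ?_
      rw [(S.hasPrimitiveVectorWith i hm hm0).lie_e_pow_succ_toEnd_f, hn, sub_self, mul_zero,
        zero_smul, smul_zero]
    · exact S.lie_pow_f_eq_zero i hm (n + 1) β hβ hβi x hx
  exact le_ker hx

end IsChevalleySystem

end Chevalley

section Casimir

section Basis

variable {K 𝔤 ι : Type*} [Field K] [LieRing 𝔤] [LieAlgebra K 𝔤]
  [IsKilling K 𝔤] [Fintype ι] (b : Basis ι K 𝔤)
  {M : Type*} [AddCommGroup M] [Module K M] [LieRingModule 𝔤 M] [LieModule K 𝔤 M]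

/-- The basis dual to `b` with respect to the Killing form. -/
noncomputable abbrev killingDualBasis : Basis ι K 𝔤 :=
  LinearMap.BilinForm.dualBasis (killingForm K 𝔤) (IsKilling.killingForm_nondegenerate K 𝔤) b

theorem sum_killingForm_smul (x : 𝔤) :
    ∑ i, killingForm K 𝔤 x (killingDualBasis b i) • b i = x := by
  conv_rhs => rw [← b.sum_repr x]
  refine Fintype.sum_congr _ _ fun i => congrArg (· • b i) ?_
  rw [← LinearMap.BilinForm.dualBasis_repr_apply (hB := IsKilling.killingForm_nondegenerate K 𝔤),
    LinearMap.BilinForm.dualBasis_dualBasis _ ⟨LieModule.traceForm_comm K 𝔤 𝔤⟩]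

theorem sum_killingForm_smul_killingDualBasis (x : 𝔤) :
    ∑ i, killingForm K 𝔤 x (b i) • killingDualBasis b i = x := by
  conv_rhs => rw [← (killingDualBasis b).sum_repr x]
  simp only [LinearMap.BilinForm.dualBasis_repr_apply]

variable (M) in
/-- The Casimir operator of the Killing form on the module `M`. -/
noncomputable def casimir : Module.End K M :=
  ∑ i, toEnd K 𝔤 M (b i) ∘ₗ toEnd K 𝔤 M (killingDualBasis b i)

theorem casimir_apply (m : M) : casimir b M m = ∑ i, ⁅b i, ⁅killingDualBasis b i, m⁆⁆ := by
  simp only [casimir, LinearMap.sum_apply, LinearMap.comp_apply, toEnd_apply_apply]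

theorem casimir_lie (x : 𝔤) (m : M) : casimir b M ⁅x, m⁆ = ⁅x, casimir b M m⁆ := by
  have leibniz (i : ι) : ⁅x, ⁅b i, ⁅killingDualBasis b i, m⁆⁆⁆ =
      ⁅b i, ⁅killingDualBasis b i, ⁅x, m⁆⁆⁆ +
        (⁅⁅x, b i⁆, ⁅killingDualBasis b i, m⁆⁆ + ⁅b i, ⁅⁅x, killingDualBasis b i⁆, m⁆⁆) := by
    rw [leibniz_lie x (b i), leibniz_lie x (killingDualBasis b i), lie_add]
    abel
  have expand_left (i : ι) : ⁅⁅x, b i⁆, ⁅killingDualBasis b i, m⁆⁆ =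
      ∑ j, killingForm K 𝔤 ⁅x, b i⁆ (killingDualBasis b j) • ⁅b j, ⁅killingDualBasis b i, m⁆⁆ := by
    conv_lhs => rw [← sum_killingForm_smul b ⁅x, b i⁆]
    simp only [sum_lie, smul_lie]
  have expand_right (i : ι) : ⁅b i, ⁅⁅x, killingDualBasis b i⁆, m⁆⁆ =
      ∑ j, killingForm K 𝔤 ⁅x, killingDualBasis b i⁆ (b j) • ⁅b i, ⁅killingDualBasis b j, m⁆⁆ := by
    conv_lhs => rw [← sum_killingForm_smul_killingDualBasis b ⁅x, killingDualBasis b i⁆]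
    simp only [sum_lie, lie_sum, smul_lie, lie_smul]
  have killingForm_skew (i j : ι) : killingForm K 𝔤 ⁅x, b j⁆ (killingDualBasis b i) =
      -killingForm K 𝔤 ⁅x, killingDualBasis b i⁆ (b j) := by
    rw [LieModule.traceForm_apply_lie_apply', LieModule.traceForm_comm]
  rw [casimir_apply, casimir_apply, lie_sum, Fintype.sum_congr _ _ leibniz,
    Finset.sum_add_distrib, eq_comm, add_eq_left, Finset.sum_add_distrib,
    Fintype.sum_congr _ _ expand_left, Fintype.sum_congr _ _ expand_right, Finset.sum_comm,
    ← Finset.sum_add_distrib]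
  refine Finset.sum_eq_zero fun i _ => ?_
  rw [← Finset.sum_add_distrib]
  refine Finset.sum_eq_zero fun j _ => ?_
  rw [killingForm_skew, neg_smul, neg_add_cancel]

end Basis

variable [IsKilling ℂ L] {H : LieSubalgebra ℂ L} {ι : Type*} [Fintype ι] {b : Basis ι ℂ L}
  {χ : ι → Dual ℂ H}

theorem killingDualBasis_mem_weightSpace (hb : ∀ i, b i ∈ weightSpace L ⇑(χ i)) (i : ι) :
    killingDualBasis b i ∈ weightSpace L ⇑(-χ i) := by
  refine (mem_weightSpace _ _).mpr fun t => (killingDualBasis b).ext_elem fun j => ?_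
  have htb : ⁅(t : L), b j⁆ = χ j t • b j := (mem_weightSpace _ _).mp (hb j) t
  change (killingDualBasis b).repr ⁅(t : L), killingDualBasis b i⁆ j =
    (killingDualBasis b).repr (-χ i t • killingDualBasis b i) j
  rw [LinearMap.BilinForm.dualBasis_repr_apply, LinearMap.BilinForm.dualBasis_repr_apply,
    LieModule.traceForm_apply_lie_apply', htb, map_smul, map_smul, LinearMap.smul_apply,
    LinearMap.BilinForm.apply_dualBasis_left]
  split_ifs with hji
  · rw [hji, smul_eq_mul, smul_eq_mul, neg_mul]
  · rw [smul_zero, smul_zero, neg_zero]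

variable [FiniteDimensional ℂ L] [H.IsCartanSubalgebra] {r : ℕ} {α : Fin r → Dual ℂ H}

theorem killingDual_apply_comm (χ κ : Dual ℂ H) : χ (killingDual H κ) = κ (killingDual H χ) := by
  rw [← isKillingDual_killingDual, LieModule.traceForm_comm, isKillingDual_killingDual]

variable (H) in
theorem exists_basis_mem_weightSpace :
    ∃ (ι : Type) (_ : Fintype ι) (b : Basis ι ℂ L) (χ : ι → Dual ℂ H),
      ∀ i, b i ∈ weightSpace L ⇑(χ i) := by
  have internal : DirectSum.IsInternal
      fun χ : Weight ℂ H L => (genWeightSpace L ⇑χ).toSubmodule := by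
    refine (DirectSum.isInternal_submodule_iff_iSupIndep_and_iSup_eq_top _).mpr ⟨?_, ?_⟩
    · exact LieSubmodule.iSupIndep_toSubmodule.mpr (iSupIndep_genWeightSpace' ℂ H L)
    · exact LieSubmodule.iSup_toSubmodule_eq_top.mpr (iSup_genWeightSpace_eq_top' ℂ H L)
  let b := internal.collectedBasis fun χ => finBasis ℂ (genWeightSpace L ⇑χ).toSubmodule
  have : Finite _ := Module.Finite.finite_basis b
  refine ⟨_, Fintype.ofFinite _, b, fun i => i.1.toLinear, fun i => ?_⟩
  rw [← rootSpace_eq_weightSpace]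
  exact internal.collectedBasis_mem _ i

theorem lie_eq_killingForm_smul_killingDual {χ : Dual ℂ H} (hχ : χ ≠ 0) {x y : L}
    (hx : x ∈ weightSpace L ⇑χ) (hy : y ∈ weightSpace L ⇑(-χ)) :
    ⁅x, y⁆ = killingForm ℂ L x y • (killingDual H χ : L) := by
  obtain rfl | hx0 := eq_or_ne x 0
  · rw [zero_lie, map_zero, LinearMap.zero_apply, zero_smul]
  · exact IsKilling.lie_eq_killingForm_smul_of_mem_rootSpace_of_mem_rootSpace_neg
      (α := (isRoot_of_mem_weightSpace hχ hx hx0).wt)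
      (weightSpace_le_genWeightSpace L _ hx) (weightSpace_le_genWeightSpace L _ hy)

/-- The vector of the Cartan subalgebra dual to the sum of the positive members of the list `χ`
of weights of `L`, that is, to the sum of the positive roots. -/
noncomputable def twoRhoDual (α : Fin r → Dual ℂ H) (χ : ι → Dual ℂ H) : H :=
  ∑ i, if χ i ∈ strictCone α then killingDual H (χ i) else 0

variable {κ : Dual ℂ H} {M : Type*} [AddCommGroup M] [Module ℂ M] [LieRingModule L M]
  [LieModule ℂ L M] {m : M}

theorem IsSingularVector.lie_lie_eq_smul (hα : IsBase H α)
    (hm : IsSingularVector H α κ m) {χ : Dual ℂ H} {x y : L} (hx : x ∈ weightSpace L ⇑χ)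
    (hy : y ∈ weightSpace L ⇑(-χ)) (hxy : killingForm ℂ L x y = 1) :
    ⁅x, ⁅y, m⁆⁆ = (killingForm ℂ L (killingDual H κ) y * killingForm ℂ L (killingDual H κ) x +
      if χ ∈ strictCone α then κ (killingDual H χ) else 0) • m := by
  have lie_of_mem_H (t : H) : ⁅(t : L), m⁆ = κ t • m := (mem_weightSpace _ _).mp hm.weight_mem t
  have hx0 : x ≠ 0 := by
    rintro rfl
    simp at hxy
  by_cases hχ : χ ∈ strictCone α
  · have hχ0 : χ ≠ 0 := ne_zero_of_mem_strictCone hα.natIndep hχ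
    have hx' : x ∈ posPart H α := mem_weightPart hχ hx
    rw [leibniz_lie, hm.lie_eq_zero x hx', lie_zero, add_zero,
      lie_eq_killingForm_smul_killingDual hχ0 hx hy, hxy, one_smul, lie_of_mem_H,
      killingForm_eq_zero_of_mem_posPart hα _ hx', mul_zero, zero_add, if_pos hχ]
  · have hχ' : -χ ∈ cone α := by
      obtain rfl | hχ0 := eq_or_ne χ 0
      · rw [neg_zero]; exact zero_mem _
      · refine mem_cone_iff.mpr (Or.inr ?_)
        exact (hα.mem_strictCone_or_neg_mem (isRoot_of_mem_weightSpace hχ0 hx hx0)).resolve_left hχ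
    have hy' : y ∈ borel H α := mem_weightPart hχ' hy
    have lie_y := hm.lie_eq_smul hα hy'
    obtain rfl | hχ0 := eq_or_ne χ 0
    · have hx' : x ∈ borel H α := mem_weightPart (S := (cone α : Set (Dual ℂ H))) (zero_mem _) hx
      rw [if_neg hχ, add_zero, lie_y, lie_smul, hm.lie_eq_smul hα hx', mul_smul]
    · have hy0 : y ∈ posPart H α := mem_weightPart ((mem_cone_iff.mp hχ').resolve_left
        (neg_ne_zero.mpr hχ0)) hy
      rw [if_neg hχ, add_zero, hm.lie_eq_zero y hy0, lie_zero,
        killingForm_eq_zero_of_mem_posPart hα _ hy0, zero_mul, zero_smul]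

theorem casimir_apply_of_isSingularVector (hα : IsBase H α)
    (hb : ∀ i, b i ∈ weightSpace L ⇑(χ i)) (hm : IsSingularVector H α κ m) :
    casimir b M m = κ (killingDual H κ + twoRhoDual α χ) • m := by
  have killingForm_dual (i : ι) : killingForm ℂ L (b i) (killingDualBasis b i) = 1 := by
    rw [LieModule.traceForm_comm, LinearMap.BilinForm.apply_dualBasis_left, if_pos rfl]
  have sum_mul : ∑ i, killingForm ℂ L (killingDual H κ) (killingDualBasis b i) *
      killingForm ℂ L (killingDual H κ) (b i) = κ (killingDual H κ) := by
    have := congrArg (killingForm ℂ L (killingDual H κ))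
      (sum_killingForm_smul b (killingDual H κ : L))
    rwa [map_sum, Fintype.sum_congr _ _ fun i => map_smul _ _ _, isKillingDual_killingDual] at this
  rw [casimir_apply, Fintype.sum_congr _ _ fun i => hm.lie_lie_eq_smul hα (hb i)
    (killingDualBasis_mem_weightSpace hb i) (killingForm_dual i), ← Finset.sum_smul,
    Finset.sum_add_distrib, sum_mul, map_add, twoRhoDual, map_sum]
  simp only [apply_ite κ, map_zero]

end Casimir

section CasimirEigenvalue

variable [FiniteDimensional ℂ L] [IsKilling ℂ L] {H : LieSubalgebra ℂ L} [H.IsCartanSubalgebra]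
  {r : ℕ} {α : Fin r → Dual ℂ H} {h : Fin r → H} {e f : Fin r → L}

namespace IsChevalleySystem

theorem lie_f_generator_ne_zero (S : IsChevalleySystem H α h e f) (i : Fin r) (κ : Dual ℂ H) :
    ⁅f i, Verma.generator S.isBase κ⁆ ≠ 0 := by
  intro hf
  have lift_lie := InducedModule.lift_lie S.isBase.isCompl_posPart_borel
    (borelCharacter S.isBase κ) (e i) (S.f_mem_posPart_neg i) (Verma.generator S.isBase κ)
  rw [hf, map_zero, InducedModule.lift_generator, ← lie_skew, (S.isSl2Triple i).lie_e_f,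
    eq_comm, neg_eq_zero] at lift_lie
  exact (S.isSl2Triple i).h_ne_zero lift_lie

variable {ι : Type*} [Fintype ι] {b : Basis ι ℂ L} {χ : ι → Dual ℂ H}

/-- The generator `g` of the Verma module of highest weight `0` and the singular vector `⁅f i, g⁆`
of weight `-α i` have the same Casimir eigenvalue. -/
theorem apply_twoRhoDual (S : IsChevalleySystem H α h e f) (hb : ∀ j, b j ∈ weightSpace L ⇑(χ j))
    (i : Fin r) : α i (twoRhoDual α χ) = α i (killingDual H (α i)) := by
  set g := Verma.generator S.isBase 0
  have hg : IsSingularVector H α 0 g := Verma.isSingularVector_generator S.isBase 0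
  have hfg : IsSingularVector H α (-α i) ⁅f i, g⁆ := by
    have := S.isSingularVector_pow_f i hg (n := 0) Nat.cast_zero.symm
    rwa [zero_add, Nat.cast_one, one_smul, zero_sub, pow_one, toEnd_apply_apply] at this
  have casimir_eq := casimir_apply_of_isSingularVector S.isBase hb hfg
  rw [casimir_lie, casimir_apply_of_isSingularVector S.isBase hb hg, LinearMap.zero_apply,
    zero_smul, lie_zero, eq_comm, smul_eq_zero_iff_left (S.lie_f_generator_ne_zero i 0), map_neg,
    LinearMap.neg_apply, map_add, map_neg, neg_eq_zero, neg_add_eq_zero] at casimir_eq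
  exact casimir_eq.symm

theorem eq_of_casimir_eq (S : IsChevalleySystem H α h e f)
    (hb : ∀ j, b j ∈ weightSpace L ⇑(χ j)) {η κ : Dual ℂ H} (hη : ∀ i, ∃ n : ℕ, η (h i) = n)
    (hκ : ∀ i, ∃ n : ℕ, κ (h i) = n) (hcone : η - κ ∈ cone α)
    (heq : η (killingDual H η + twoRhoDual α χ) = κ (killingDual H κ + twoRhoDual α χ)) :
    η = κ := by
  choose a ha using hη
  choose c hc using hκ
  choose p hp killingDual_eq using
    fun i => (S.isBase.isRoot i).exists_pos_killingDual_eq_smul_coroot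
  obtain ⟨n, hn⟩ := mem_cone_iff_exists.mp hcone
  have factor : (η - κ) (killingDual H η + killingDual H κ + twoRhoDual α χ) = 0 := by
    have := killingDual_apply_comm η κ
    simp only [map_add, LinearMap.sub_apply] at heq ⊢
    linear_combination heq + this
  have term (i : Fin r) : α i (killingDual H η + killingDual H κ + twoRhoDual α χ) =
      ((p i * (a i + c i + 2) : ℝ) : ℂ) := by
    rw [map_add, map_add, S.apply_twoRhoDual hb, killingDual_apply_comm, killingDual_apply_comm _ κ,
      killingDual_eq, ← S.h_eq_coroot, map_smul, map_smul, map_smul, ha, hc, S.apply_h]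
    push_cast
    simp only [smul_eq_mul]
    ring
  have sum_eq_zero : ∑ i, n i * (p i * (a i + c i + 2)) = 0 := by
    rw [hn, LinearMap.sum_apply, Fintype.sum_congr _ _ fun i => by
      rw [LinearMap.smul_apply, term, smul_eq_mul]] at factor
    exact_mod_cast factor
  have n_eq_zero (i : Fin r) : n i = 0 := by
    have pos : 0 < p i * (a i + c i + 2) := mul_pos (hp i) (by positivity)
    have := (Finset.sum_eq_zero_iff_of_nonneg fun i _ => by have := hp i; positivity).mp
      sum_eq_zero i (Finset.mem_univ i)
    exact_mod_cast (mul_eq_zero_iff_right pos.ne').mp this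
  rw [← sub_eq_zero, hn]
  exact Finset.sum_eq_zero fun i _ => by rw [n_eq_zero, Nat.cast_zero, zero_smul]

end IsChevalleySystem

end CasimirEigenvalue

section Presentation

theorem toEnd_pow_map {R 𝔤 M E : Type*} [CommRing R] [LieRing 𝔤] [LieAlgebra R 𝔤] [AddCommGroup M]
    [Module R M] [LieRingModule 𝔤 M] [LieModule R 𝔤 M] [AddCommGroup E] [Module R E]
    [LieRingModule 𝔤 E] [LieModule R 𝔤 E] {A : M →ₗ[R] E} {y : 𝔤} (hA : ∀ u, A ⁅y, u⁆ = ⁅y, A u⁆)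
    (n : ℕ) (u : M) : (toEnd R 𝔤 E y ^ n) (A u) = A ((toEnd R 𝔤 M y ^ n) u) :=
  LinearMap.congr_fun (Module.End.commute_pow_left_of_commute
    (LinearMap.ext fun u => (hA u).symm : toEnd R 𝔤 E y ∘ₗ A = A ∘ₗ toEnd R 𝔤 M y) n) u

/-- The subspace of the module `E` cut out by the equations `f i ^ (n i + 1) = 0`. For simple root
vectors `f i` of negative roots these are the relations satisfied by a highest weight vector of a
finite-dimensional module on which the simple coroots act by `n i`. -/
def prvSubspace {r : ℕ} (f : Fin r → L) (n : Fin r → ℕ) (E : Type*) [AddCommGroup E] [Module ℂ E]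
    [LieRingModule L E] [LieModule ℂ L E] : Submodule ℂ E :=
  ⨅ i, LinearMap.ker (toEnd ℂ L E (f i) ^ (n i + 1))

variable {H : LieSubalgebra ℂ L} [H.IsCartanSubalgebra] {r : ℕ} {α : Fin r → Dual ℂ H}
  {κ : Dual ℂ H} {h : Fin r → H} {e f : Fin r → L} {n : Fin r → ℕ}
  {M : Type*} [AddCommGroup M] [Module ℂ M] [LieRingModule L M] [LieModule ℂ L M] {m : M}
  {W : Type*} [AddCommGroup W] [Module ℂ W] [LieRingModule L W] [LieModule ℂ L W] {w : W}
  {E : Type*} [AddCommGroup E] [Module ℂ E] [LieRingModule L E] [LieModule ℂ L E] {x : E}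

theorem mem_prvSubspace : x ∈ prvSubspace f n E ↔ ∀ i, (toEnd ℂ L E (f i) ^ (n i + 1)) x = 0 := by
  simp only [prvSubspace, Submodule.mem_iInf, LinearMap.mem_ker]

theorem IsSingularVector.map (hm : IsSingularVector H α κ m) (φ : M →ₗ⁅ℂ,L⁆ W) :
    IsSingularVector H α κ (φ m) where
  weight_mem := (mem_weightSpace _ _).mpr fun t =>
    (φ.map_lie t m).symm.trans
      ((congrArg φ ((mem_weightSpace _ _).mp hm.weight_mem t)).trans (φ.map_smul _ _))
  lie_eq_zero x hx := by rw [← LieModuleHom.map_lie, hm.lie_eq_zero x hx, map_zero]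

namespace IsChevalleySystem

theorem mem_prvSubspace_of_isSingularVector [FiniteDimensional ℂ M]
    (S : IsChevalleySystem H α h e f) (hm : IsSingularVector H α κ m)
    (hn : ∀ i, κ (h i) = n i) : m ∈ prvSubspace f n M :=
  mem_prvSubspace.mpr fun i => S.pow_f_eq_zero_of_finiteDimensional i hm (hn i)

end IsChevalleySystem

variable [FiniteDimensional ℂ L] [IsKilling ℂ L]

/-- The submodule of the Verma module of highest weight `κ` generated by the vectors
`f i ^ (n i + 1) g`, where `g` is the canonical generator. -/
noncomputable def Verma.relationSubmodule (hα : IsBase H α) (κ : Dual ℂ H) (f : Fin r → L)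
    (n : Fin r → ℕ) : LieSubmodule ℂ L (Verma hα κ) :=
  ⨆ i, LieSubmodule.lieSpan ℂ L
    {(toEnd ℂ L (Verma hα κ) (f i) ^ (n i + 1)) (Verma.generator hα κ)}

namespace IsChevalleySystem

theorem mem_of_ne_bot (S : IsChevalleySystem H α h e f) (hm : IsSingularVector H α κ m)
    (hgen : Generates (posPart H (-α)) m) (hf : ∀ i, ∃ k, (toEnd ℂ L M (f i) ^ k) m = 0)
    {N : LieSubmodule ℂ L M} (hN : N ≠ ⊥) : m ∈ N := by
  obtain rfl | hm0 := eq_or_ne m 0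
  · exact zero_mem N
  obtain ⟨ι, _, b, χ, hb⟩ := exists_basis_mem_weightSpace H
  obtain ⟨η, hcone, u, hu, hu0, huη⟩ :=
    exists_isSingularVector_of_ne_bot S.isBase (hgen.weightPart_eq_top hm.weight_mem) hN
  have casimir_eq_smul :
      casimir b M = κ (killingDual H κ + twoRhoDual α χ) • LinearMap.id :=
    hgen.linearMap_ext (fun y _ => casimir_lie b y) (fun y _ u => (lie_smul _ y u).symm)
      (casimir_apply_of_isSingularVector S.isBase hb hm)
  have eigenvalue_eq :
      κ (killingDual H κ + twoRhoDual α χ) = η (killingDual H η + twoRhoDual α χ) := by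
    refine smul_left_injective ℂ hu0 ?_
    have := casimir_apply_of_isSingularVector S.isBase hb huη
    rwa [casimir_eq_smul] at this
  obtain rfl : κ = η := S.eq_of_casimir_eq hb
    (fun i => S.exists_nat_of_pow_f_eq_zero i hm hm0 (hf i))
    (fun i => S.exists_nat_of_pow_f_eq_zero i huη hu0 (S.exists_pow_f_eq_zero i hgen (hf i) u))
    hcone eigenvalue_eq
  obtain ⟨a, rfl⟩ := Submodule.mem_span_singleton.mp
    (hgen.mem_span_of_mem_weightSpace S.isBase hm.weight_mem huη.weight_mem)
  have ha : a ≠ 0 := fun ha => hu0 (by rw [ha, zero_smul])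
  exact (N.toSubmodule.smul_mem_iff ha).mp hu

theorem relationSubmodule_le_ker_lift (S : IsChevalleySystem H α h e f) (hn : ∀ i, κ (h i) = n i)
    (hx : x ∈ prvSubspace f n E) : (Verma.relationSubmodule S.isBase κ f n).toSubmodule ≤
      LinearMap.ker (InducedModule.lift S.isBase.isCompl_posPart_borel
        (borelCharacter S.isBase κ) x) := by
  set A := InducedModule.lift S.isBase.isCompl_posPart_borel (borelCharacter S.isBase κ) x
  have hA {y : L} (hy : y ∈ posPart H (-α)) (u : Verma S.isBase κ) : A ⁅y, u⁆ = ⁅y, A u⁆ :=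
    InducedModule.lift_lie _ _ x hy u
  rw [Verma.relationSubmodule, LieSubmodule.iSup_toSubmodule]
  refine iSup_le fun i => IsSingularVector.lieSpan_singleton_le S.isBase
    (S.isSingularVector_pow_f i (Verma.isSingularVector_generator S.isBase κ) (hn i)) ?_ ?_
  · rw [LinearMap.mem_ker, ← toEnd_pow_map (hA (S.f_mem_posPart_neg i)),
      InducedModule.lift_generator]
    exact mem_prvSubspace.mp hx i
  · intro y hy u hu
    rw [LinearMap.mem_ker] at hu ⊢
    rw [hA hy, hu, lie_zero]

theorem ker_lift_le_relationSubmodule [FiniteDimensional ℂ W] (S : IsChevalleySystem H α h e f)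
    (hw : IsSingularVector H α κ w) (hw0 : w ≠ 0) (hn : ∀ i, κ (h i) = n i) :
    (Verma.lift S.isBase hw).ker ≤ Verma.relationSubmodule S.isBase κ f n := by
  set g := Verma.generator S.isBase κ
  set p := Verma.lift S.isBase hw
  set N := Verma.relationSubmodule S.isBase κ f n
  have hpg : p g = w := Verma.lift_generator S.isBase hw
  have N_le_ker : N ≤ p.ker := by
    refine iSup_le fun i => LieSubmodule.lieSpan_le.mpr (Set.singleton_subset_iff.mpr ?_)
    refine (p.mem_ker).mpr ((toEnd_pow_map (A := p.toLinearMap) (p.map_lie _) _ g).symm.trans ?_)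
    exact (congrArg _ hpg).trans (S.pow_f_eq_zero_of_finiteDimensional i hw (hn i))
  let q : Verma S.isBase κ →ₗ⁅ℂ,L⁆ Verma S.isBase κ ⧸ N := LieSubmodule.Quotient.mk' N
  have pow_f_eq_zero (i : Fin r) :
      (toEnd ℂ L (Verma S.isBase κ ⧸ N) (f i) ^ (n i + 1)) (q g) = 0 := by
    refine (toEnd_pow_map (A := q.toLinearMap) (q.map_lie _) _ g).trans ?_
    exact (LieSubmodule.Quotient.mk_eq_zero N).mpr
      (LieSubmodule.mem_iSup_of_mem i (LieSubmodule.subset_lieSpan rfl))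
  by_contra hle
  obtain ⟨u, hu, hug⟩ := (LieSubmodule.mem_map _).mp (S.mem_of_ne_bot
    ((Verma.isSingularVector_generator S.isBase κ).map q)
    ((Verma.generates_generator S.isBase κ).map (LieSubmodule.Quotient.surjective_mk' N))
    (fun i => ⟨_, pow_f_eq_zero i⟩) (mt (LieSubmodule.Quotient.map_mk'_eq_bot_le N _).mp hle))
  have hgu : g - u ∈ N := (LieSubmodule.Quotient.mk_eq_zero N).mp (by rw [map_sub, ← hug, sub_self])
  have hg : g ∈ p.ker := (sub_add_cancel g u) ▸ add_mem (N_le_ker hgu) hu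
  exact hw0 (hpg ▸ p.mem_ker.mp hg)

theorem exists_linearMap_of_mem_prvSubspace [FiniteDimensional ℂ W]
    (S : IsChevalleySystem H α h e f) (hw : IsSingularVector H α κ w) (hw0 : w ≠ 0)
    (hgen : Generates (posPart H (-α)) w) (hn : ∀ i, κ (h i) = n i)
    (hx : x ∈ prvSubspace f n E) :
    ∃ A : W →ₗ[ℂ] E, A w = x ∧ ∀ y ∈ posPart H (-α), ∀ u, A ⁅y, u⁆ = ⁅y, A u⁆ := by
  set p := Verma.lift S.isBase hw
  set B := InducedModule.lift S.isBase.isCompl_posPart_borel (borelCharacter S.isBase κ) x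
  have ker_le : LinearMap.ker p.toLinearMap ≤ LinearMap.ker B := fun u hu =>
    S.relationSubmodule_le_ker_lift hn hx (S.ker_lift_le_relationSubmodule hw hw0 hn hu)
  have range_eq_top : LinearMap.range p.toLinearMap = ⊤ := by
    refine hgen _ ⟨_, Verma.lift_generator S.isBase hw⟩ ?_
    rintro y - _ ⟨u, rfl⟩
    exact ⟨⁅y, u⁆, p.map_lie y u⟩
  obtain ⟨q, hq⟩ := p.toLinearMap.exists_rightInverse_of_surjective range_eq_top
  have B_q (u : Verma S.isBase κ) : B (q (p u)) = B u := LinearMap.sub_mem_ker_iff.mp <| ker_le <|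
    LinearMap.sub_mem_ker_iff.mpr (LinearMap.congr_fun hq (p u))
  refine ⟨B ∘ₗ q, ?_, fun y hy v => ?_⟩
  · have := B_q (Verma.generator S.isBase κ)
    rwa [Verma.lift_generator, InducedModule.lift_generator] at this
  · obtain ⟨u, rfl⟩ := LinearMap.range_eq_top.mp range_eq_top v
    change B (q ⁅y, p u⁆) = ⁅y, B (q (p u))⁆
    rw [← LieModuleHom.map_lie, B_q, B_q]
    exact InducedModule.lift_lie _ _ x hy u

end IsChevalleySystem

end Presentation

section PRV

variable {H : LieSubalgebra ℂ L} {r : ℕ} {α : Fin r → Dual ℂ H}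
  {η κ : Dual ℂ H} {h : Fin r → H} {e f : Fin r → L} {n : Fin r → ℕ}
  {W : Type*} [AddCommGroup W] [Module ℂ W] [LieRingModule L W] [LieModule ℂ L W] {w : W}
  {D : Type*} [AddCommGroup D] [Module ℂ D] [LieRingModule L D] [LieModule ℂ L D] {ε : D}
  {E : Type*} [AddCommGroup E] [Module ℂ E] [LieRingModule L E] [LieModule ℂ L E] {x : E}

theorem apply_mem_weightSpace {B : D →ₗ[ℂ] E} (hB : B ∈ weightSpace (D →ₗ[ℂ] E) ⇑η)
    (hε : ε ∈ weightSpace D ⇑κ) : B ε ∈ weightSpace E ⇑(η + κ) := by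
  refine (mem_weightSpace _ _).mpr fun t => ?_
  have htB : ⁅t, B⁆ = η t • B := (mem_weightSpace _ _).mp hB t
  have htε : ⁅t, ε⁆ = κ t • ε := (mem_weightSpace _ _).mp hε t
  have := LinearMap.congr_fun htB ε
  rw [LieHom.lie_apply, htε, map_smul, sub_eq_iff_eq_add] at this
  rw [this, LinearMap.add_apply, add_smul, LinearMap.smul_apply]

theorem IsSingularVector.apply_lie [LieRing.IsNilpotent H] {B : D →ₗ[ℂ] E}
    (hB : IsSingularVector H α η B) {y : L} (hy : y ∈ posPart H α) (d : D) :
    B ⁅y, d⁆ = ⁅y, B d⁆ := by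
  have := LinearMap.congr_fun (hB.lie_eq_zero y hy) d
  rw [LieHom.lie_apply, LinearMap.zero_apply, sub_eq_zero] at this
  exact this.symm

theorem isSingularVector_of_apply [LieRing.IsNilpotent H]
    (hεgen : Generates (posPart H α) ε) (hε : ε ∈ weightSpace D ⇑κ) {B : D →ₗ[ℂ] E}
    (hB : ∀ y ∈ posPart H α, ∀ d, B ⁅y, d⁆ = ⁅y, B d⁆)
    (hBε : B ε ∈ weightSpace E ⇑(η + κ)) : IsSingularVector H α η B := by
  have lie_B (y : L) (hy : y ∈ posPart H α) : ⁅y, B⁆ = 0 := LinearMap.ext fun d => by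
    rw [LieHom.lie_apply, hB y hy, sub_self, LinearMap.zero_apply]
  refine ⟨(mem_weightSpace _ _).mpr fun t => ?_, lie_B⟩
  refine hεgen.linearMap_ext (fun y hy d => ?_) (fun y hy d => ?_) ?_
  · have hty : ⁅y, (t : L)⁆ ∈ posPart H α := by
      rw [← lie_skew]
      exact neg_mem (LieSubmodule.lie_mem (x := t) _ hy)
    have : ⁅y, ⁅(t : L), B⁆⁆ = 0 := by
      rw [leibniz_lie, lie_B y hy, lie_B _ hty, lie_zero, add_zero]
    have := LinearMap.congr_fun this d
    rw [LieHom.lie_apply, LinearMap.zero_apply, sub_eq_zero] at this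
    exact this.symm
  · rw [LinearMap.smul_apply, LinearMap.smul_apply, hB y hy, lie_smul]
  · have htε : ⁅(t : L), ε⁆ = κ t • ε := (mem_weightSpace _ _).mp hε t
    have htBε : ⁅(t : L), B ε⁆ = (η + κ) t • B ε := (mem_weightSpace _ _).mp hBε t
    change ⁅(t : L), B⁆ ε = (η t • B) ε
    rw [LieHom.lie_apply, htε, htBε, map_smul, LinearMap.add_apply, add_smul, add_sub_cancel_right,
      LinearMap.smul_apply]

variable [H.IsCartanSubalgebra]

variable (E) in
/-- The evaluation of an equivariant map `W → Hom(D, E)` at a vector of `W` and a vector of `D`. -/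
def evalHom (w : W) (ε : D) : (W →ₗ⁅ℂ,L⁆ D →ₗ[ℂ] E) →ₗ[ℂ] E where
  toFun φ := φ w ε
  map_add' _ _ := rfl
  map_smul' _ _ := rfl

theorem evalHom_injective (hw : IsSingularVector H α η w) (hwgen : Generates (posPart H (-α)) w)
    (hεgen : Generates (posPart H α) ε) : Function.Injective (evalHom (L := L) E w ε) := by
  intro φ ψ heq
  have apply_w : φ w = ψ w := hεgen.linearMap_ext (fun _ => (hw.map φ).apply_lie)
    (fun _ => (hw.map ψ).apply_lie) heq
  have toLinearMap_eq : φ.toLinearMap = ψ.toLinearMap :=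
    hwgen.linearMap_ext (fun y _ => φ.map_lie y) (fun y _ => ψ.map_lie y) apply_w
  exact LieModuleHom.ext (LinearMap.congr_fun toLinearMap_eq)

namespace IsChevalleySystem

theorem evalHom_mem_prvSubspace [FiniteDimensional ℂ L] [IsKilling ℂ L] [FiniteDimensional ℂ D]
    (S : IsChevalleySystem H α h e f)
    (hw : IsSingularVector H α η w) (hε : IsSingularVector H (-α) κ ε)
    (hn : ∀ i, κ (h i) = -n i) (φ : W →ₗ⁅ℂ,L⁆ D →ₗ[ℂ] E) :
    evalHom E w ε φ ∈ prvSubspace e n E := by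
  refine mem_prvSubspace.mpr fun i => ?_
  have hφ : ∀ d, φ w ⁅e i, d⁆ = ⁅e i, φ w d⁆ := (hw.map φ).apply_lie (S.e_mem_posPart i)
  have e_pow_ε := mem_prvSubspace.mp (S.neg.mem_prvSubspace_of_isSingularVector hε
    (n := n) fun i => by rw [Pi.neg_apply, map_neg, hn, neg_neg]) i
  exact (toEnd_pow_map hφ _ ε).trans (by rw [e_pow_ε, map_zero])

variable [FiniteDimensional ℂ L] [IsKilling ℂ L] [FiniteDimensional ℂ W] [FiniteDimensional ℂ D]
  [FiniteDimensional ℂ E]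

theorem exists_evalHom_eq (S : IsChevalleySystem H α h e f)
    (hw : IsSingularVector H α η w) (hw0 : w ≠ 0) (hwgen : Generates (posPart H (-α)) w)
    (hε : IsSingularVector H (-α) κ ε) (hε0 : ε ≠ 0) (hεgen : Generates (posPart H α) ε)
    (hn : ∀ i, κ (h i) = -n i) (hx : x ∈ weightSpace E ⇑(η + κ)) (hxn : x ∈ prvSubspace e n E) :
    ∃ φ, evalHom (L := L) E w ε φ = x := by
  obtain ⟨B, rfl, hB⟩ := S.neg.exists_linearMap_of_mem_prvSubspace hε hε0
    (by rwa [neg_neg]) (fun i => by rw [Pi.neg_apply, map_neg, hn, neg_neg]) hxn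
  rw [neg_neg] at hB
  have hBη : IsSingularVector H α η B := isSingularVector_of_apply hεgen hε.weight_mem hB hx
  choose l hl using fun i => S.exists_nat_of_finiteDimensional i hw hw0
  obtain ⟨A, hAw, hA⟩ := S.exists_linearMap_of_mem_prvSubspace hw hw0 hwgen hl
    (S.mem_prvSubspace_of_isSingularVector hBη hl)
  have hA' (y : L) (v : W) : A ⁅y, v⁆ = ⁅y, A v⁆ :=
    hwgen.map_lie_of_isSingularVector S.isBase hA hw (by rwa [hAw]) y v
  exact ⟨{ A with map_lie' := hA' _ _ }, LinearMap.congr_fun hAw ε⟩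

theorem range_evalHom (S : IsChevalleySystem H α h e f)
    (hw : IsSingularVector H α η w) (hw0 : w ≠ 0) (hwgen : Generates (posPart H (-α)) w)
    (hε : IsSingularVector H (-α) κ ε) (hε0 : ε ≠ 0) (hεgen : Generates (posPart H α) ε)
    (hn : ∀ i, κ (h i) = -n i) :
    LinearMap.range (evalHom (L := L) E w ε) =
      (weightSpace E ⇑(η + κ)).toSubmodule ⊓ prvSubspace e n E := by
  refine le_antisymm ?_ fun x hx =>
    S.exists_evalHom_eq hw hw0 hwgen hε hε0 hεgen hn hx.1 hx.2
  rintro _ ⟨φ, rfl⟩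
  have mem_weight : φ w ε ∈ weightSpace E ⇑(η + κ) :=
    apply_mem_weightSpace (hw.map φ).weight_mem hε.weight_mem
  exact ⟨mem_weight, S.evalHom_mem_prvSubspace hw hε hn φ⟩

/-- The theorem of Parthasarathy, Ranga Rao and Varadarajan on tensor product multiplicities. -/
theorem finrank_lieModuleHom_eq (S : IsChevalleySystem H α h e f)
    (hw : IsSingularVector H α η w) (hw0 : w ≠ 0) (hwgen : Generates (posPart H (-α)) w)
    (hε : IsSingularVector H (-α) κ ε) (hε0 : ε ≠ 0) (hεgen : Generates (posPart H α) ε)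
    (hn : ∀ i, κ (h i) = -n i) :
    finrank ℂ (W →ₗ⁅ℂ,L⁆ D →ₗ[ℂ] E) =
      finrank ℂ ↥((weightSpace E ⇑(η + κ)).toSubmodule ⊓ prvSubspace e n E) := by
  rw [← LinearMap.finrank_range_of_inj (evalHom_injective hw hwgen hεgen),
    S.range_evalHom hw hw0 hwgen hε hε0 hεgen hn]

end IsChevalleySystem

end PRV

section SimplyLaced

variable [FiniteDimensional ℂ L] [IsKilling ℂ L] {H : LieSubalgebra ℂ L} [H.IsCartanSubalgebra]
  {r : ℕ} {α : Fin r → Dual ℂ H} {χ ψ γ : Dual ℂ H}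

theorem coroot_eq_smul_killingDual (hχ : IsRoot H χ) :
    IsKilling.coroot hχ.wt = (2 * (χ (killingDual H χ))⁻¹) • killingDual H χ := by
  rw [mul_smul, ofNat_smul_eq_nsmul]
  rfl

theorem IsRoot.apply_coroot_comm (hχ : IsRoot H χ) (hψ : IsRoot H ψ)
    (hlen : χ (killingDual H χ) = ψ (killingDual H ψ)) :
    χ (IsKilling.coroot hψ.wt) = ψ (IsKilling.coroot hχ.wt) := by
  rw [coroot_eq_smul_killingDual, coroot_eq_smul_killingDual, map_smul, map_smul,
    killingDual_apply_comm χ ψ, hlen]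

theorem IsRoot.eq_of_apply_coroot_eq (hχ : IsRoot H χ) (hψ : IsRoot H ψ)
    (hlen : χ (killingDual H χ) = ψ (killingDual H ψ)) {n : ℕ} (hn : 2 ≤ n)
    (h : ψ (IsKilling.coroot hχ.wt) = n) : ψ = χ := by
  let i : H.root := ⟨hχ.wt, by simpa using hχ.wt_isNonZero⟩
  let j : H.root := ⟨hψ.wt, by simpa using hψ.wt_isNonZero⟩
  have pairing_ji : (IsKilling.rootSystem H).pairingIn ℤ j i = n := by
    have : (IsKilling.rootSystem H).pairing j i = n := h
    rw [← (IsKilling.rootSystem H).algebraMap_pairingIn ℤ, algebraMap_int_eq, eq_intCast] at this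
    exact_mod_cast this
  have pairing_ij : (IsKilling.rootSystem H).pairingIn ℤ i j = n := by
    have : (IsKilling.rootSystem H).pairing i j = n := (hχ.apply_coroot_comm hψ hlen).trans h
    rw [← (IsKilling.rootSystem H).algebraMap_pairingIn ℤ, algebraMap_int_eq, eq_intCast] at this
    exact_mod_cast this
  by_contra hne
  have root_ne : (IsKilling.rootSystem H).root i ≠ (IsKilling.rootSystem H).root j :=
    Ne.symm hne
  have root_ne_neg : (IsKilling.rootSystem H).root i ≠ -(IsKilling.rootSystem H).root j := by
    intro hneg
    have hψχ : ψ = -χ := (neg_eq_iff_eq_neg.mpr hneg).symm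
    rw [hψχ, LinearMap.neg_apply, hχ.apply_coroot_self] at h
    have : (-2 : ℤ) = n := by exact_mod_cast h
    omega
  have := (IsKilling.rootSystem H).pairingIn_pairingIn_mem_set_of_isCrystal_of_isRed' i j
    root_ne root_ne_neg
  rw [pairing_ij, pairing_ji] at this
  simp only [Set.mem_insert_iff, Set.mem_singleton_iff, Prod.mk.injEq] at this
  omega

namespace IsChevalleySystem

variable {h : Fin r → H} {e f : Fin r → L}

theorem pow_e_eq_zero_of_mem_weightSpace (S : IsChevalleySystem H α h e f)
    (hlaced : ∀ χ ψ, IsRoot H χ → IsRoot H ψ → χ (killingDual H χ) = ψ (killingDual H ψ))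
    (hγ : IsRoot H γ) (i : Fin r) {k n : ℕ} (hi : γ (h i) = k - n) {x : L}
    (hx : x ∈ weightSpace L ⇑γ) : (toEnd ℂ L L (e i) ^ (n + 1)) x = 0 := by
  by_contra hne
  set ψ := γ + ((n + 1 : ℕ) : ℂ) • α i with hψ
  have hmem : (toEnd ℂ L L (e i) ^ (n + 1)) x ∈ weightSpace L ⇑ψ := by
    have := S.neg.pow_f_mem_weightSpace i hx (n + 1)
    rwa [Pi.neg_apply, smul_neg, sub_neg_eq_add] at this
  have apply_ψ : ψ (h i) = ((k + n + 2 : ℕ) : ℂ) := by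
    rw [hψ, LinearMap.add_apply, LinearMap.smul_apply, hi, S.apply_h i, smul_eq_mul]
    push_cast
    ring
  have hψ0 : ψ ≠ 0 := by
    intro h0
    rw [h0, LinearMap.zero_apply] at apply_ψ
    exact Nat.cast_ne_zero.mpr (Nat.succ_ne_zero (k + n + 1)) apply_ψ.symm
  have hψi : ψ = α i := by
    have hroot := isRoot_of_mem_weightSpace hψ0 hmem hne
    exact (S.isBase.isRoot i).eq_of_apply_coroot_eq hroot (hlaced _ _ (S.isBase.isRoot i) hroot)
      (Nat.le_add_left 2 (k + n)) (S.h_eq_coroot i ▸ apply_ψ)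
  have hn : n = 0 := by
    rw [hψi, S.apply_h i] at apply_ψ
    have : 2 = k + n + 2 := by exact_mod_cast apply_ψ
    omega
  subst hn
  rw [hψ, zero_add, Nat.cast_one, one_smul, add_eq_right] at hψi
  exact hγ.1 hψi

theorem finrank_weightSpace_inf_prvSubspace (S : IsChevalleySystem H α h e f)
    (hlaced : ∀ χ ψ, IsRoot H χ → IsRoot H ψ → χ (killingDual H χ) = ψ (killingDual H ψ))
    (hγ : IsRoot H γ) {k n : Fin r → ℕ} (hi : ∀ i, γ (h i) = k i - n i) :
    finrank ℂ ↥((weightSpace L ⇑γ).toSubmodule ⊓ prvSubspace e n L) = 1 := by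
  have le_prv : (weightSpace L ⇑γ).toSubmodule ≤ prvSubspace e n L := fun x hx =>
    mem_prvSubspace.mpr fun i => S.pow_e_eq_zero_of_mem_weightSpace hlaced hγ i (hi i) hx
  rw [inf_eq_left.mpr le_prv, ← rootSpace_eq_weightSpace]
  exact IsKilling.finrank_rootSpace_eq_one hγ.wt hγ.wt_isNonZero

end IsChevalleySystem

end SimplyLaced

section Duality

variable {K 𝔤 V U W E : Type*} [Field K] [LieRing 𝔤] [LieAlgebra K 𝔤]
  [AddCommGroup V] [Module K V] [LieRingModule 𝔤 V] [LieModule K 𝔤 V] [FiniteDimensional K V]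
  [AddCommGroup U] [Module K U] [LieRingModule 𝔤 U] [LieModule K 𝔤 U]
  [AddCommGroup W] [Module K W] [LieRingModule 𝔤 W] [LieModule K 𝔤 W] [FiniteDimensional K W]
  [AddCommGroup E] [Module K E] [LieRingModule 𝔤 E] [LieModule K 𝔤 E]

/-- The vectors of `V` on which a submodule of the dual of `V` vanishes. -/
def dualCoannihilator (Q : LieSubmodule K 𝔤 (Dual K V)) : LieSubmodule K 𝔤 V where
  __ := Q.toSubmodule.dualCoannihilator
  lie_mem {x v} hv := (Submodule.mem_dualCoannihilator _).mpr fun φ hφ => by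
    have := (Submodule.mem_dualCoannihilator v).mp hv ⁅x, φ⁆ (Q.lie_mem hφ)
    rwa [Module.Dual.lie_apply, neg_eq_zero] at this

theorem isIrreducible_dual [IsIrreducible K 𝔤 V] : IsIrreducible K 𝔤 (Dual K V) := by
  have := nontrivial_of_isIrreducible K 𝔤 V
  refine IsIrreducible.mk fun Q hQ => ?_
  have annihilator_eq : (dualCoannihilator Q).toSubmodule.dualAnnihilator = Q.toSubmodule :=
    Subspace.dualCoannihilator_dualAnnihilator_eq
  obtain h | h := eq_bot_or_eq_top (dualCoannihilator Q)
  · rw [h, LieSubmodule.bot_toSubmodule, Submodule.dualAnnihilator_bot] at annihilator_eq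
    exact (LieSubmodule.toSubmodule_eq_top Q).mp annihilator_eq.symm
  · rw [h, LieSubmodule.top_toSubmodule, Submodule.dualAnnihilator_top] at annihilator_eq
    exact absurd ((LieSubmodule.toSubmodule_eq_bot Q).mp annihilator_eq.symm) hQ

variable (V E) in
/-- The isomorphism `E ⊗ (V ⊗ U) ≃ Hom(W, Hom(V*, E))` given by a perfect pairing of `W`
with `U`. -/
noncomputable def contraction (B : W →ₗ[K] U →ₗ[K] K) [B.IsPerfPair] :
    E ⊗[K] (V ⊗[K] U) ≃ₗ[K] W →ₗ[K] Dual K V →ₗ[K] E :=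
  TensorProduct.comm K E (V ⊗[K] U) ≪≫ₗ TensorProduct.assoc K V U E ≪≫ₗ
    TensorProduct.leftComm K V U E ≪≫ₗ
    TensorProduct.congr B.flip.toPerfPair
      (TensorProduct.congr (evalEquiv K V) (.refl K E) ≪≫ₗ dualTensorHomEquiv K (Dual K V) E) ≪≫ₗ
    dualTensorHomEquiv K W (Dual K V →ₗ[K] E)

variable {B : W →ₗ[K] U →ₗ[K] K} [B.IsPerfPair]

theorem contraction_tmul_apply (x : E) (a : V) (b : U) (w : W) (ξ : Dual K V) :
    contraction V E B (x ⊗ₜ (a ⊗ₜ b)) w ξ = B w b • ξ a • x :=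
  rfl

theorem contraction_lie (hB : ∀ (y : 𝔤) w b, B ⁅y, w⁆ b + B w ⁅y, b⁆ = 0) (y : 𝔤)
    (t : E ⊗[K] (V ⊗[K] U)) : contraction V E B ⁅y, t⁆ = ⁅y, contraction V E B t⁆ := by
  induction t using TensorProduct.induction_on with
  | zero => rw [lie_zero, map_zero, lie_zero]
  | add t s ht hs => rw [lie_add, map_add, map_add, lie_add, ht, hs]
  | tmul x q =>
    induction q using TensorProduct.induction_on with
    | zero => rw [TensorProduct.tmul_zero, lie_zero, map_zero, lie_zero]
    | add t s ht hs => rw [TensorProduct.tmul_add, lie_add, map_add, map_add, lie_add, ht, hs]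
    | tmul a b =>
      refine LinearMap.ext₂ fun w ξ => ?_
      have hB' : B w ⁅y, b⁆ = -B ⁅y, w⁆ b := eq_neg_of_add_eq_zero_right (hB y w b)
      simp only [TensorProduct.LieModule.lie_tmul_right, TensorProduct.tmul_add, map_add,
        LinearMap.add_apply, LieHom.lie_apply, LinearMap.sub_apply, contraction_tmul_apply,
        Module.Dual.lie_apply, lie_smul, hB']
      module

variable (V E) in
theorem finrank_maxTrivSubmodule_tensorProduct
    (hB : ∀ (y : 𝔤) w b, B ⁅y, w⁆ b + B w ⁅y, b⁆ = 0) :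
    finrank K (maxTrivSubmodule K 𝔤 (E ⊗[K] (V ⊗[K] U))) =
      finrank K (W →ₗ⁅K,𝔤⁆ Dual K V →ₗ[K] E) :=
  let contractionLie : E ⊗[K] (V ⊗[K] U) ≃ₗ⁅K,𝔤⁆ W →ₗ[K] Dual K V →ₗ[K] E :=
    { contraction V E B with map_lie' := contraction_lie hB _ _ }
  ((maxTrivEquiv contractionLie).toLinearEquiv.trans maxTrivLinearMapEquivLieModuleHom).finrank_eq

end Duality

section HighestWeight

variable {H : LieSubalgebra ℂ L} [H.IsCartanSubalgebra] {r : ℕ} {α : Fin r → Dual ℂ H}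
  {μ : Dual ℂ H} {V : Type} [AddCommGroup V] [Module ℂ V] [LieRingModule L V] [LieModule ℂ L V]

theorem IsHWIrrep.exists_isSingularVector (hα : IsBase H α) (hV : IsHWIrrep H α μ V) :
    ∃ v : V, v ≠ 0 ∧ IsSingularVector H α μ v := by
  obtain ⟨-, v, hv0, hvμ, hv⟩ := hV
  refine ⟨v, hv0, (mem_weightSpace _ _).mpr hvμ, fun x hx => ?_⟩
  have le_ker : (weightPart L (strictCone α : Set (Dual ℂ H))).toSubmodule ≤
      LinearMap.ker ((toEnd ℂ L V : L →ₗ[ℂ] Module.End ℂ V).flip v) := by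
    refine weightPart_toSubmodule_le_iff.mpr fun χ hχ x hx => ?_
    change ⁅x, v⁆ = 0
    obtain rfl | hx0 := eq_or_ne x 0
    · exact zero_lie v
    · have hroot := isRoot_of_mem_weightSpace (ne_zero_of_mem_strictCone hα.natIndep hχ) hx hx0
      exact hv χ ⟨hroot, mem_cone_iff_exists.mp (mem_cone_iff.mpr (Or.inr hχ))⟩ x
        (weightSpace_le_genWeightSpace L _ hx)
  exact le_ker hx

theorem IsDualPair.exists_isPerfPair {𝔤 W U : Type} [LieRing 𝔤]
    [AddCommGroup W] [Module ℂ W] [LieRingModule 𝔤 W] [FiniteDimensional ℂ W]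
    [AddCommGroup U] [Module ℂ U] [LieRingModule 𝔤 U] (h : IsDualPair (L := 𝔤) W U) :
    ∃ B : W →ₗ[ℂ] U →ₗ[ℂ] ℂ, B.IsPerfPair ∧ ∀ (x : 𝔤) w u, B ⁅x, w⁆ u + B w ⁅x, u⁆ = 0 := by
  obtain ⟨B, hleft, hright, hB⟩ := h
  refine ⟨B, .of_injective ?_ ?_, hB⟩
  · exact (injective_iff_map_eq_zero B).mpr fun w hw => hleft w (LinearMap.congr_fun hw)
  · exact (injective_iff_map_eq_zero B.flip).mpr fun u hu => hright u (LinearMap.congr_fun hu)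

end HighestWeight

/-- If `𝔤` is simply laced (all roots have the same Killing length) and
`ν̄ - μ` is a root, then the `𝔤`-invariant subspace of `adj(𝔤) ⊗ V_μ ⊗ V_ν` has dimension
exactly `1`. -/
theorem statement3
    {L : Type} [LieRing L] [LieAlgebra ℂ L] [FiniteDimensional ℂ L]
    [LieAlgebra.IsSemisimple ℂ L]
    (H : LieSubalgebra ℂ L) [H.IsCartanSubalgebra]
    {r : ℕ} (α : Fin r → Module.Dual ℂ H) (hc : Fin r → H)
    (hbase : IsBase H α) (hcoroot : ∀ j, IsCoroot H (α j) (hc j))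
    (hlaced : ∀ (χ ψ : Module.Dual ℂ H) (tχ tψ : H), IsRoot H χ → IsRoot H ψ →
      IsKillingDual H χ tχ → IsKillingDual H ψ tψ → χ tχ = ψ tψ)
    (μ ν νbar : Module.Dual ℂ H) (hμ : IsDomInt hc μ) (hν : IsDomInt hc ν)
    (Vμ : Type) [AddCommGroup Vμ] [Module ℂ Vμ] [LieRingModule L Vμ]
    [LieModule ℂ L Vμ] [FiniteDimensional ℂ Vμ]
    (Vν : Type) [AddCommGroup Vν] [Module ℂ Vν] [LieRingModule L Vν]
    [LieModule ℂ L Vν] [FiniteDimensional ℂ Vν]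
    (Wν : Type) [AddCommGroup Wν] [Module ℂ Wν] [LieRingModule L Wν]
    [LieModule ℂ L Wν] [FiniteDimensional ℂ Wν]
    (hVμ : IsHWIrrep H α μ Vμ)
    (hVν : IsHWIrrep H α ν Vν) (hWν : IsHWIrrep H α νbar Wν)
    (hdual : IsDualPair (L := L) Wν Vν)
    (hroot : IsRoot H (νbar - μ)) :
    Module.finrank ℂ (maxTrivSubmodule ℂ L (L ⊗[ℂ] (Vμ ⊗[ℂ] Vν))) = 1 := by
  have : IsKilling ℂ L := inferInstance
  obtain ⟨h, e, f, S⟩ := hbase.exists_isChevalleySystem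
  obtain ⟨B, hB, hBlie⟩ := hdual.exists_isPerfPair
  obtain ⟨v, hv0, hv⟩ := hVμ.exists_isSingularVector hbase
  obtain ⟨w, hw0, hw⟩ := hWν.exists_isSingularVector hbase
  have : IsIrreducible ℂ L Vμ := hVμ.1
  have : IsIrreducible ℂ L Wν := hWν.1
  have : IsIrreducible ℂ L (Dual ℂ Vμ) := isIrreducible_dual
  obtain ⟨ε, hε0, hε⟩ :=
    (hv.generates hbase hv0).exists_isSingularVector_dual hbase hv.weight_mem hv0
  have hεgen : Generates (posPart H α) ε := by simpa only [neg_neg] using hε.generates hbase.neg hε0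
  choose n hn using fun i => S.exists_nat_of_finiteDimensional i hv hv0
  choose k hk using fun i => S.exists_nat_of_finiteDimensional i hw hw0
  rw [finrank_maxTrivSubmodule_tensorProduct Vμ L hBlie,
    S.finrank_lieModuleHom_eq hw hw0 (hw.generates hbase hw0) hε hε0 hεgen (n := n)
      fun i => by rw [LinearMap.neg_apply, hn], ← sub_eq_add_neg]
  exact S.finrank_weightSpace_inf_prvSubspace (fun χ ψ hχ hψ => hlaced χ ψ _ _ hχ hψ
    (isKillingDual_killingDual χ) (isKillingDual_killingDual ψ)) hroot
    fun i => by rw [LinearMap.sub_apply, hn, hk]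

end AdjPaper
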